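/- Let H ⊆ B be a subspace. For each i set n_i = dim B_i, k_i = dim(pr_i H), and r_i = k_i − dim(pr_i H ∩ (pr_i H)^{⊥_i}), and let d be the number of indices i such that ⟨−,−⟩_{B_i} is symmetric and max{0, 2k_i − n_i} < r_i. Then the stabilizer S = {g ∈ Q_B : g(H) = H}, viewed as a subspace of End(B), has exactly 2^d connected components. -/

import Mathlib

/-!
The stabilizer of `H` consists of the block upper triangular maps `g` preserving `H` whose
diagonal block at `i` is an isometry of `B_i` of determinant one preserving `W_i = pr_i H`.
Conversely, conjugating block diagonal maps by a unitriangular map that carries `∏ W_i` onto `H`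
lifts such tuples of isometries continuously, and the elements of the stabilizer with given
diagonal form an affine space. So the number of components is the product over `i` of the
numbers for the group of special isometries of `B_i` preserving `W_i`. This reduces the problem
to one space `V` with a form `β` and a subspace `W`; put `R = W ∩ W^⊥`.

Let `g` be a special isometry preserving `W`. If `1 + g` is invertible, a path through the
Cayley transform joins `g` to `1`. In general the projection `π` onto the generalized eigenspace
`E` of `g` for `-1` is a polynomial in `g`; it is self-adjoint, so `τ = 1 - 2π` is a special
isometry preserving `W`, and `1 + gτ` is invertible, so `g` is joined to `τ`. If `X` is a
skew-adjoint map of `E` that is invertible and preserves `W ∩ E`, then both `1 + h` and `1 + τh`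
are invertible for the Cayley transform `h` of a suitable multiple of `X`, so `τ` is joined to
`1`. Such an `X` amounts to a nondegenerate form on `E` of the symmetry type opposite to `β` for
which `W ∩ E` and `W^⊥ ∩ E` are orthogonal. It exists always if `β` is skew-symmetric, and if
`β` is symmetric as soon as `dim E` and `dim (W ∩ E) + dim (R ∩ E)` are even; the former holds
because `det τ = 1`.

For symmetric `β` the parity of `dim (W ∩ E) + dim (R ∩ E)` is given by a continuous sign
character, the determinant of the isometry induced on `W / R`. If `max {0, 2k - n} < r`, then
neither `W` nor `W^⊥` is isotropic, and the product of the reflections in a vector of `W` and in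
a vector of `W^⊥` has sign `-1`, so there are two components. Otherwise `W = R` or `W^⊥ = R`,
the parity is automatically even, and there is one component.
-/

open Module

/-- Left orthogonal complement `H^⊥ = {v | ⟨v,w⟩ = 0 for all w ∈ H}` of a subspace with
respect to a bilinear form. -/
def bperp {V : Type*} [AddCommGroup V] [Module ℂ V]
    (B : V →ₗ[ℂ] V →ₗ[ℂ] ℂ) (H : Submodule ℂ V) : Submodule ℂ V where
  carrier := {v | ∀ w ∈ H, B v w = 0}
  add_mem' := by
    intro a b ha hb w hw
    rw [map_add, LinearMap.add_apply, ha w hw, hb w hw, add_zero]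
  zero_mem' := by
    intro w hw
    simp
  smul_mem' := by
    intro c a ha w hw
    rw [map_smul, LinearMap.smul_apply, ha w hw, smul_zero]

/-- `B_{≤ i} = B₁ ⊕ ⋯ ⊕ B_i`, as a subspace of `B = B₁ ⊕ ⋯ ⊕ B_m` (modelled as the
product `∀ j, Bi j`): the vectors whose coordinates vanish beyond `i`. -/
def Ble {m : ℕ} (Bi : Fin m → Type*) [∀ i, AddCommGroup (Bi i)] [∀ i, Module ℂ (Bi i)]
    (i : Fin m) : Submodule ℂ (∀ j, Bi j) :=
  Submodule.pi (Set.Ioi i) (fun j => (⊥ : Submodule ℂ (Bi j)))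

/-- `B_{< i} = B₁ ⊕ ⋯ ⊕ B_{i-1}`, as a subspace of `B = B₁ ⊕ ⋯ ⊕ B_m`: the vectors whose
coordinates vanish from `i` on. -/
def Blt {m : ℕ} (Bi : Fin m → Type*) [∀ i, AddCommGroup (Bi i)] [∀ i, Module ℂ (Bi i)]
    (i : Fin m) : Submodule ℂ (∀ j, Bi j) :=
  Submodule.pi (Set.Ici i) (fun j => (⊥ : Submodule ℂ (Bi j)))

/-- `pr_i H ⊆ B_i`: the image of `H ∩ B_{≤ i}` under the projection `B_{≤ i} → B_i`
with kernel `B_{< i}` (in the product model, the `i`-th coordinate projection). -/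
def prI {m : ℕ} (Bi : Fin m → Type*) [∀ i, AddCommGroup (Bi i)] [∀ i, Module ℂ (Bi i)]
    (i : Fin m) (H : Submodule ℂ (∀ j, Bi j)) : Submodule ℂ (Bi i) :=
  Submodule.map (LinearMap.proj i : (∀ j, Bi j) →ₗ[ℂ] Bi i) (H ⊓ Ble Bi i)

/-- Membership in the group `Q_B`: a linear endomorphism `g` of `B = B₁ ⊕ ⋯ ⊕ B_m` lies in
`Q_B` if it is a linear automorphism and, for each `i`, there is an isometry `gi` of
`(B_i, ⟨-,-⟩_{B_i})` with `det gi = 1` such that `g v - gi v ∈ B_{< i}` for all `v ∈ B_i`. -/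
def memQB {m : ℕ} (Bi : Fin m → Type*) [∀ i, AddCommGroup (Bi i)] [∀ i, Module ℂ (Bi i)]
    (βi : ∀ i, Bi i →ₗ[ℂ] Bi i →ₗ[ℂ] ℂ)
    (g : (∀ j, Bi j) →ₗ[ℂ] (∀ j, Bi j)) : Prop :=
  Function.Bijective g ∧
  ∀ i, ∃ gi : Bi i ≃ₗ[ℂ] Bi i,
    (∀ x y, βi i (gi x) (gi y) = βi i x y) ∧
    LinearMap.det (gi : Bi i →ₗ[ℂ] Bi i) = 1 ∧
    ∀ v : ∀ j, Bi j, (∀ j, j ≠ i → v j = 0) →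
      g v - Pi.single i (gi (v i)) ∈ Blt Bi i

section Isometries

variable {K V : Type*} [Field K] [AddCommGroup V] [Module K V]

/-- The endomorphisms of `V` that map a subspace `W` into itself. -/
def invariantSubalgebra (W : Submodule K V) : Subalgebra K (End K V) where
  carrier := {a | ∀ w ∈ W, a w ∈ W}
  mul_mem' ha hb w hw := ha _ (hb w hw)
  add_mem' ha hb w hw := W.add_mem (ha w hw) (hb w hw)
  algebraMap_mem' c _ hw := W.smul_mem c hw

/-- The special isometries of the form `β` that map the subspace `W` into itself. -/
def specialStabilizer (β : LinearMap.BilinForm K V) (W : Submodule K V) :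
    Submonoid (End K V) where
  carrier := {a | β.IsOrthogonal a ∧ LinearMap.det a = 1 ∧ a ∈ invariantSubalgebra W}
  mul_mem' ha hb := ⟨fun x y => (ha.1 _ _).trans (hb.1 x y),
    by rw [map_mul, ha.2.1, hb.2.1, one_mul], mul_mem ha.2.2 hb.2.2⟩
  one_mem' := ⟨fun _ _ => rfl, map_one _, one_mem _⟩

variable {β : LinearMap.BilinForm K V} {W : Submodule K V}

lemma isUnit_of_injective [FiniteDimensional K V] {a : End K V} (ha : Function.Injective a) :
    IsUnit a :=
  (End.isUnit_iff a).mpr ⟨ha, LinearMap.injective_iff_surjective.mp ha⟩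

lemma map_eq_of_isUnit [FiniteDimensional K V] {a : End K V}
    (ha : IsUnit a) (haW : a ∈ invariantSubalgebra W) : W.map a = W :=
  Submodule.eq_of_le_of_finrank_eq (Submodule.map_le_iff_le_comap.mpr haW)
    (LinearEquiv.finrank_map_eq (LinearEquiv.ofBijective a ((End.isUnit_iff a).mp ha)) W)

lemma mem_invariantSubalgebra_orthogonal [FiniteDimensional K V] {a : End K V}
    (hu : IsUnit a) (ha : β.IsOrthogonal a) (haW : a ∈ invariantSubalgebra W) :
    a ∈ invariantSubalgebra (β.orthogonal W) := by
  intro x hx w hw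
  rw [← map_eq_of_isUnit hu haW] at hw
  obtain ⟨w, hw, rfl⟩ := hw
  exact (ha w x).trans (hx w hw)

lemma isUnit_of_isOrthogonal [FiniteDimensional K V] (hβ : β.Nondegenerate) {a : End K V}
    (ha : β.IsOrthogonal a) : IsUnit a := by
  refine isUnit_of_injective ((injective_iff_map_eq_zero a).mpr fun v hv => hβ.1 v fun w => ?_)
  rw [← ha, hv, map_zero, LinearMap.zero_apply]

lemma det_eq_det_of_isAdjointPair [FiniteDimensional K V] (hβ : β.Nondegenerate)
    {a b : End K V} (h : LinearMap.IsAdjointPair β β a b) :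
    LinearMap.det a = LinearMap.det b := by
  have conj : b.dualMap = (β.toDual hβ).toLinearMap ∘ₗ a ∘ₗ (β.toDual hβ).symm.toLinearMap := by
    ext φ y
    obtain ⟨x, rfl⟩ := (β.toDual hβ).surjective φ
    simpa [LinearMap.BilinForm.toDual_def] using (h x y).symm
  rw [← LinearMap.det_dualMap b, conj, LinearMap.det_conj]

lemma exists_isAdjointPair_inverse [FiniteDimensional K V] (hβ : β.Nondegenerate) {a : End K V}
    (ha : β.IsOrthogonal a) : ∃ b : End K V, a * b = 1 ∧ LinearMap.IsAdjointPair β β a b := by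
  obtain ⟨u, rfl⟩ := isUnit_of_isOrthogonal hβ ha
  refine ⟨↑u⁻¹, u.mul_inv, fun x y => ?_⟩
  rw [← ha x, ← End.mul_apply _ _ y, u.mul_inv, End.one_apply]

lemma det_mul_det_of_isOrthogonal [FiniteDimensional K V] (hβ : β.Nondegenerate) {a : End K V}
    (ha : β.IsOrthogonal a) : LinearMap.det a * LinearMap.det a = 1 := by
  obtain ⟨b, hab, hadj⟩ := exists_isAdjointPair_inverse hβ ha
  nth_rewrite 2 [det_eq_det_of_isAdjointPair hβ hadj]
  rw [← map_mul, hab, map_one]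

lemma det_eq_one_of_isUnit_one_add [FiniteDimensional K V] (hβ : β.Nondegenerate) {a : End K V}
    (ha : β.IsOrthogonal a) (hu : IsUnit (1 + a)) : LinearMap.det a = 1 := by
  obtain ⟨b, hab, hadj⟩ := exists_isAdjointPair_inverse hβ ha
  have hdet : LinearMap.det (1 + a) = LinearMap.det (1 + b) :=
    det_eq_det_of_isAdjointPair hβ (LinearMap.isAdjointPair_one.add hadj)
  have hfac : 1 + a = a * (1 + b) := by rw [mul_add, hab, mul_one, add_comm]
  refine mul_right_cancel₀ (hu.map LinearMap.det).ne_zero ?_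
  rw [one_mul]
  nth_rewrite 1 [hdet]
  rw [← map_mul, ← hfac]

lemma mem_specialStabilizer_of_mul_eq [FiniteDimensional K V] (hβ : β.Nondegenerate)
    {c M N : End K V} (hc : c * N = M) (hN : IsUnit N) (hNM : IsUnit (N + M))
    (hMW : M ∈ invariantSubalgebra W) (hNW : N ∈ invariantSubalgebra W)
    (hMN : ∀ x y, β (M x) (M y) = β (N x) (N y)) : c ∈ specialStabilizer β W := by
  have hsurj : ∀ x, ∃ y, N y = x := ((End.isUnit_iff N).mp hN).surjective
  have hcN : ∀ x, c (N x) = M x := LinearMap.congr_fun hc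
  have orth : β.IsOrthogonal c := by
    intro x y
    obtain ⟨x, rfl⟩ := hsurj x
    obtain ⟨y, rfl⟩ := hsurj y
    rw [hcN, hcN, hMN]
  refine ⟨orth, det_eq_one_of_isUnit_one_add hβ orth ?_, fun w hw => ?_⟩
  · have : (1 + c) * N = N + M := by rw [add_mul, one_mul, hc]
    exact isUnit_of_mul_isUnit_left (this ▸ hNM)
  · rw [← map_eq_of_isUnit hN hNW] at hw
    obtain ⟨w, hw, rfl⟩ := hw
    exact (hcN w).symm ▸ hMW w hw

lemma mem_specialStabilizer_of_mul_eq_one_add [FiniteDimensional K V] [NeZero (2 : K)]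
    (hβ : β.Nondegenerate) {a c : End K V} (ha : a ∈ specialStabilizer β W) (hu : IsUnit (1 + a))
    {t : K} (ht : IsUnit (1 + a + t • (1 - a)))
    (hc : c * (1 + a + t • (1 - a)) = 1 + a + t • (a - 1)) : c ∈ specialStabilizer β W := by
  have haW := ha.2.2
  refine mem_specialStabilizer_of_mul_eq hβ hc ht ?_ ?_ ?_ fun x y => ?_
  · have hsum : 1 + a + t • (1 - a) + (1 + a + t • (a - 1)) = algebraMap K _ 2 * (1 + a) := by
      rw [← neg_sub a 1, smul_neg, map_ofNat]
      noncomm_ring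
    exact hsum ▸ ((isUnit_iff_ne_zero.mpr two_ne_zero).map (algebraMap K _)).mul hu
  · exact add_mem (add_mem (one_mem _) haW) (Subalgebra.smul_mem _ (sub_mem haW (one_mem _)) t)
  · exact add_mem (add_mem (one_mem _) haW) (Subalgebra.smul_mem _ (sub_mem (one_mem _) haW) t)
  · simp only [LinearMap.add_apply, LinearMap.sub_apply, LinearMap.smul_apply, End.one_apply,
      map_add, map_sub, map_smul, ha.1 x y, smul_eq_mul]
    ring

lemma exists_mem_specialStabilizer_mul_eq_one [FiniteDimensional K V] (hβ : β.Nondegenerate)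
    {a : End K V} (ha : a ∈ specialStabilizer β W) : ∃ b ∈ specialStabilizer β W, a * b = 1 := by
  obtain ⟨horth, hdet, haW⟩ := ha
  have hu := isUnit_of_isOrthogonal hβ horth
  obtain ⟨b, hab, -⟩ := exists_isAdjointPair_inverse hβ horth
  refine ⟨b, ⟨fun x y => ?_, ?_, fun w hw => ?_⟩, hab⟩
  · rw [← horth (b x), ← End.mul_apply, ← End.mul_apply, hab, End.one_apply, End.one_apply]
  · rw [← one_mul (LinearMap.det b), ← hdet, ← map_mul, hab, map_one, hdet]
  · rw [← map_eq_of_isUnit hu haW] at hw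
    obtain ⟨w, hw, rfl⟩ := hw
    rwa [← End.mul_apply, mul_eq_one_comm.mp hab]

end Isometries

section Fitting

variable {K : Type*} [Field K]

open Polynomial in
lemma exists_idempotent_mem_adjoin {A : Type*} [Ring A] [Algebra K A] {f : A}
    (hf : IsIntegral K f) :
    ∃ π ∈ Algebra.adjoin K {f}, ∃ u ∈ Algebra.adjoin K {f}, ∃ k : ℕ,
      IsIdempotentElem π ∧ f ^ k * π = 0 ∧ u * f ^ (k + 1) = 1 - π := by
  obtain ⟨r, hr, hndvd⟩ :=
    (minpoly K f).exists_eq_pow_rootMultiplicity_mul_and_not_dvd (minpoly.ne_zero hf) 0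
  set k := (minpoly K f).rootMultiplicity 0
  rw [C_0, sub_zero] at hr hndvd
  obtain ⟨a, b, hab⟩ : IsCoprime (X ^ (k + 1)) r :=
    (prime_X.coprime_iff_not_dvd.mpr hndvd).pow_left
  have hπ : f ^ k * aeval f (b * r) = 0 := by
    have h : X ^ k * (b * r) = b * minpoly K f := by rw [hr]; ring
    simpa only [map_mul, map_pow, aeval_X, minpoly.aeval, mul_zero] using congrArg (aeval f) h
  have hu : aeval f a * f ^ (k + 1) = 1 - aeval f (b * r) := by
    rw [eq_sub_iff_add_eq]
    simpa only [map_add, map_mul, map_pow, aeval_X, map_one] using congrArg (aeval f) hab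
  refine ⟨_, aeval_mem_adjoin_singleton K f, _, aeval_mem_adjoin_singleton K f, k, ?_, hπ, hu⟩
  rw [IsIdempotentElem, ← sub_eq_zero, ← neg_eq_zero, neg_sub]
  calc aeval f (b * r) - aeval f (b * r) * aeval f (b * r)
      = (1 - aeval f (b * r)) * aeval f (b * r) := by rw [sub_mul, one_mul]
    _ = 0 := by rw [← hu, pow_succ', mul_assoc, mul_assoc, hπ, mul_zero, mul_zero]

variable {V : Type*} [AddCommGroup V] [Module K V] {β : LinearMap.BilinForm K V}

lemma apply_one_add_pow_of_isOrthogonal {g : End K V} (hg : β.IsOrthogonal g) (k : ℕ) (x y : V) :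
    β x (((1 + g) ^ k) y) = β (((1 + g) ^ k) x) ((g ^ k) y) := by
  induction k generalizing x y with
  | zero => rfl
  | succ k ih =>
    have step : ∀ z, β x ((1 + g) z) = β ((1 + g) x) (g z) := fun z => by
      simp only [LinearMap.add_apply, End.one_apply, map_add, hg x z,
        add_comm]
    have comm : Commute g ((1 + g) ^ k) := ((Commute.one_right g).add_right (.refl g)).pow_right k
    rw [pow_succ', End.mul_apply, step, ← End.mul_apply g, comm.eq, End.mul_apply, ih,
      ← End.mul_apply, ← pow_succ, ← pow_succ', ← End.mul_apply, ← pow_succ]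

lemma isSelfAdjoint_of_apply_one_sub_eq_zero {π : End K V} (hβ : β.IsRefl)
    (hπ : ∀ x y, β (π x) ((1 - π) y) = 0) : β.IsSelfAdjoint π := by
  have key : ∀ x y, β (π x) y = β (π x) (π y) := fun x y =>
    sub_eq_zero.mp ((map_sub _ _ _).symm.trans (hπ x y))
  have key' : ∀ x y, β x (π y) = β (π x) (π y) := fun x y =>
    sub_eq_zero.mp ((LinearMap.map_sub₂ _ _ _ _).symm.trans (hβ _ _ (hπ y x)))
  exact fun x y => (key x y).trans (key' x y).symm

lemma isUnit_one_add_mul_one_sub_two_mul [FiniteDimensional K V] [NeZero (2 : K)]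
    {g π u : End K V} {k : ℕ} (hcomm : Commute π g) (hπ : IsIdempotentElem π)
    (hk : (1 + g) ^ k * π = 0) (hu : u * (1 + g) = 1 - π) :
    IsUnit (1 + g * (1 - 2 * π)) := by
  refine isUnit_of_injective ((injective_iff_map_eq_zero _).mpr fun v hv => ?_)
  have hgπ : g (π v) = π v := by
    have h : π * (1 + g * (1 - 2 * π)) = π - g * π := by
      rw [mul_add, ← mul_assoc, hcomm.eq, mul_assoc, mul_sub, two_mul, mul_add, hπ.eq]
      simp only [mul_one, mul_sub, mul_add]
      abel
    have := LinearMap.congr_fun h v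
    rw [End.mul_apply, hv, map_zero] at this
    exact (sub_eq_zero.mp this.symm).symm
  have hπv : π v = 0 := by
    have h2 : ∀ j : ℕ, ((1 + g) ^ j) (π v) = (2 : K) ^ j • π v := fun j => by
      induction j with
      | zero => simp
      | succ j ih =>
        rw [pow_succ, End.mul_apply, LinearMap.add_apply, hgπ, End.one_apply, ← two_smul K,
          map_smul, ih, smul_smul, pow_succ']
    exact (smul_eq_zero.mp ((h2 k).symm.trans (LinearMap.congr_fun hk v))).resolve_left
      (pow_ne_zero k two_ne_zero)
  have hgv : (1 + g) v = 0 := by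
    rw [← hv]
    simp [two_mul, hπv]
  have := LinearMap.congr_fun hu v
  rw [End.mul_apply, hgv, map_zero] at this
  simpa [hπv] using this.symm

lemma exists_isSelfAdjoint_idempotent [FiniteDimensional K V] [NeZero (2 : K)]
    (hβ : β.IsRefl) {g : End K V} (hg : β.IsOrthogonal g) :
    ∃ π ∈ Algebra.adjoin K {g}, IsIdempotentElem π ∧ β.IsSelfAdjoint π ∧
      IsUnit (1 + g * (1 - 2 * π)) := by
  obtain ⟨π, hπmem, u, humem, k, hπ, hk, hu⟩ :=
    exists_idempotent_mem_adjoin (Algebra.IsIntegral.isIntegral (R := K) (1 + g))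
  have hle : Algebra.adjoin K {1 + g} ≤ Algebra.adjoin K {g} :=
    Algebra.adjoin_singleton_le (add_mem (one_mem _) (Algebra.self_mem_adjoin_singleton K g))
  have hcomm : ∀ b ∈ Algebra.adjoin K {1 + g}, Commute b (1 + g) := fun b hb =>
    (Algebra.commute_of_mem_adjoin_self hb).symm
  refine ⟨π, hle hπmem, hπ, isSelfAdjoint_of_apply_one_sub_eq_zero hβ fun x y => ?_,
    isUnit_one_add_mul_one_sub_two_mul ?_ hπ hk (u := u * (1 + g) ^ k) ?_⟩
  · have h : 1 - π = (1 + g) ^ k * ((1 + g) * u) := by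
      rw [← hu, ((hcomm u humem).pow_right _).eq, pow_succ, mul_assoc]
    rw [h, End.mul_apply, apply_one_add_pow_of_isOrthogonal hg, ← End.mul_apply _ π, hk,
      LinearMap.zero_apply, map_zero, LinearMap.zero_apply]
  · simpa using (hcomm π hπmem).sub_right (Commute.one_right π)
  · rw [mul_assoc, ← pow_succ, hu]

end Fitting

section Forms

variable {K : Type*} [Field K] {E F : Type*} [AddCommGroup E] [Module K E]
  [AddCommGroup F] [Module K F] {ε : K}

/-- `ε`-symmetric bilinear forms, treating symmetric (`ε = 1`) and skew-symmetric (`ε = -1`) forms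
uniformly. -/
def IsEpsSymm (ε : K) (γ : LinearMap.BilinForm K E) : Prop :=
  ∀ x y, γ x y = ε * γ y x

lemma IsEpsSymm.isRefl {γ : LinearMap.BilinForm K E} (hγ : IsEpsSymm ε γ) : γ.IsRefl :=
  fun x y h => by rw [hγ, h, mul_zero]

lemma IsEpsSymm.congr {γ : LinearMap.BilinForm K E} (hγ : IsEpsSymm ε γ) (e : E ≃ₗ[K] F) :
    IsEpsSymm ε (LinearMap.BilinForm.congr e γ) :=
  fun _ _ => hγ _ _

/-- The orthogonal direct sum of two bilinear forms. -/
def orthogonalSum (γ : LinearMap.BilinForm K E) (δ : LinearMap.BilinForm K F) :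
    LinearMap.BilinForm K (E × F) :=
  γ.compl₁₂ (.fst K E F) (.fst K E F) + δ.compl₁₂ (.snd K E F) (.snd K E F)

lemma orthogonalSum_apply (γ : LinearMap.BilinForm K E) (δ : LinearMap.BilinForm K F)
    (x y : E × F) : orthogonalSum γ δ x y = γ x.1 y.1 + δ x.2 y.2 :=
  rfl

lemma IsEpsSymm.orthogonalSum {γ : LinearMap.BilinForm K E} {δ : LinearMap.BilinForm K F}
    (hγ : IsEpsSymm ε γ) (hδ : IsEpsSymm ε δ) : IsEpsSymm ε (orthogonalSum γ δ) := fun x y => by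
  rw [orthogonalSum_apply, orthogonalSum_apply, hγ, hδ, mul_add]

lemma nondegenerate_orthogonalSum {γ : LinearMap.BilinForm K E} {δ : LinearMap.BilinForm K F}
    (hγ : γ.Nondegenerate) (hδ : δ.Nondegenerate) : (orthogonalSum γ δ).Nondegenerate := by
  constructor <;> intro x hx <;> refine Prod.ext ?_ ?_
  · exact hγ.1 _ fun y => by simpa [orthogonalSum_apply] using hx (y, 0)
  · exact hδ.1 _ fun y => by simpa [orthogonalSum_apply] using hx (0, y)
  · exact hγ.2 _ fun y => by simpa [orthogonalSum_apply] using hx (y, 0)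
  · exact hδ.2 _ fun y => by simpa [orthogonalSum_apply] using hx (0, y)

variable (E) in
/-- The hyperbolic `ε`-symmetric form on `E ⊕ E*`. -/
def hyperbolicForm (ε : K) : LinearMap.BilinForm K (E × Dual K E) :=
  LinearMap.mk₂ K (fun x y => y.2 x.1 + ε * x.2 y.1)
    (fun _ _ _ => by simp; ring) (fun _ _ _ => by simp; ring)
    (fun _ _ _ => by simp; ring) (fun _ _ _ => by simp; ring)

lemma hyperbolicForm_apply (x y : E × Dual K E) :
    hyperbolicForm E ε x y = y.2 x.1 + ε * x.2 y.1 :=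
  rfl

lemma isEpsSymm_hyperbolicForm (hε : ε * ε = 1) : IsEpsSymm ε (hyperbolicForm E ε) :=
  fun x y => by
    rw [hyperbolicForm_apply, hyperbolicForm_apply, mul_add, ← mul_assoc, hε, one_mul, add_comm]

lemma nondegenerate_hyperbolicForm (hε : ε * ε = 1) : (hyperbolicForm E ε).Nondegenerate := by
  have hrefl : (hyperbolicForm E ε).IsRefl := (isEpsSymm_hyperbolicForm hε).isRefl
  refine hrefl.nondegenerate_iff_separatingLeft.mpr fun x hx => ?_
  refine Prod.ext ((Module.forall_dual_apply_eq_zero_iff K _).mp fun φ => ?_)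
    (LinearMap.ext fun v => ?_)
  · simpa [hyperbolicForm_apply] using hx (0, φ)
  · simpa [hyperbolicForm_apply, left_ne_zero_of_mul_eq_one hε] using hx (v, 0)

lemma exists_isEpsSymm_nondegenerate [FiniteDimensional K E] (hε : ε * ε = 1)
    (h : ε = 1 ∨ Even (finrank K E)) :
    ∃ γ : LinearMap.BilinForm K E, IsEpsSymm ε γ ∧ γ.Nondegenerate := by
  rcases h with rfl | ⟨j, hj⟩
  · let e : (Fin (finrank K E) → K) ≃ₗ[K] E := LinearEquiv.ofFinrankEq _ _ (by simp)
    have hsymm :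
        IsEpsSymm 1 (dotProductBilin K K : LinearMap.BilinForm K (Fin (finrank K E) → K)) :=
      fun x y => (dotProduct_comm x y).trans (one_mul _).symm
    exact ⟨_, hsymm.congr e, LinearMap.BilinForm.Nondegenerate.congr e
      (hsymm.isRefl.nondegenerate_iff_separatingLeft.mpr dotProduct_eq_zero)⟩
  · let e : ((Fin j → K) × Dual K (Fin j → K)) ≃ₗ[K] E :=
      LinearEquiv.ofFinrankEq _ _ (by simp [hj])
    exact ⟨_, (isEpsSymm_hyperbolicForm hε).congr e,
      (nondegenerate_hyperbolicForm hε).congr e⟩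

lemma finrank_map_add_finrank_inf_ker [FiniteDimensional K E] (f : E →ₗ[K] F)
    (P : Submodule K E) :
    finrank K (P.map f) + finrank K (P ⊓ LinearMap.ker f : Submodule K E) = finrank K P := by
  rw [← LinearMap.finrank_range_add_finrank_ker (f.domRestrict P), LinearMap.range_domRestrict,
    LinearMap.ker_domRestrict, ← Submodule.finrank_map_subtype_eq, Submodule.map_comap_subtype]

lemma exists_linearMap_eq_zero_iff_mem (P Q : Submodule K E) :
    ∃ f : E →ₗ[K] P.map Q.mkQ, (∀ x ∈ Q, f x = 0) ∧ ∀ x ∈ P, f x = 0 → x ∈ Q := by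
  obtain ⟨μ, hμ⟩ :=
    (P.map Q.mkQ).subtype.exists_leftInverse_of_injective (Submodule.ker_subtype _)
  refine ⟨μ ∘ₗ Q.mkQ, fun x hx => ?_, fun x hx h => ?_⟩
  · rw [LinearMap.comp_apply, Q.mkQ_apply, (Submodule.Quotient.mk_eq_zero Q).mpr hx, map_zero]
  · have hμx := LinearMap.congr_fun hμ ⟨Q.mkQ x, Submodule.mem_map_of_mem hx⟩
    exact (Submodule.Quotient.mk_eq_zero Q).mp (congrArg Subtype.val (hμx.symm.trans h))

/-- Coordinates adapted to `P` and `Q`: in a decomposition `E = R ⊕ R' ⊕ M ⊕ N` with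
`R = P ⊓ Q`, `P = R ⊕ M` and `Q = R ⊕ N`, the dimension condition identifies `R'` with `R*`. -/
lemma exists_linearEquiv_adapted [FiniteDimensional K E] (P Q : Submodule K E)
    (hdim : finrank K P + finrank K Q = finrank K E) :
    ∃ e : E ≃ₗ[K] (↥(P ⊓ Q) × Dual K ↥(P ⊓ Q)) × P.map Q.mkQ × Q.map P.mkQ,
      (∀ x ∈ P, (e x).1.2 = 0 ∧ (e x).2.2 = 0) ∧ ∀ x ∈ Q, (e x).1.2 = 0 ∧ (e x).2.1 = 0 := by
  have hP := finrank_map_add_finrank_inf_ker Q.mkQ P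
  have hQ := finrank_map_add_finrank_inf_ker P.mkQ Q
  rw [Submodule.ker_mkQ] at hP hQ
  rw [inf_comm] at hQ
  have hPQ := Submodule.finrank_sup_add_finrank_inf_eq P Q
  have hquot := Submodule.finrank_quotient_add_finrank (P ⊔ Q)
  obtain ⟨ρ, hρ⟩ := (P ⊓ Q).subtype.exists_leftInverse_of_injective (Submodule.ker_subtype _)
  obtain ⟨μ, hμQ, hμP⟩ := exists_linearMap_eq_zero_iff_mem P Q
  obtain ⟨ν, hνP, hνQ⟩ := exists_linearMap_eq_zero_iff_mem Q P
  let d : (E ⧸ (P ⊔ Q)) ≃ₗ[K] Dual K ↥(P ⊓ Q) :=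
    LinearEquiv.ofFinrankEq _ _ (by rw [Subspace.dual_finrank_eq]; omega)
  have hd : ∀ x, d ((P ⊔ Q).mkQ x) = 0 ↔ x ∈ P ⊔ Q := fun x =>
    d.map_eq_zero_iff.trans (Submodule.Quotient.mk_eq_zero _)
  let f : E →ₗ[K] (↥(P ⊓ Q) × Dual K ↥(P ⊓ Q)) × P.map Q.mkQ × Q.map P.mkQ :=
    (ρ.prod (d.toLinearMap ∘ₗ (P ⊔ Q).mkQ)).prod (μ.prod ν)
  have hinj : Function.Injective f := by
    refine (injective_iff_map_eq_zero f).mpr fun x hx => ?_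
    obtain ⟨hρd, hμν⟩ := Prod.ext_iff.mp hx
    obtain ⟨hρx, hdx⟩ : ρ x = 0 ∧ d ((P ⊔ Q).mkQ x) = 0 := Prod.ext_iff.mp hρd
    obtain ⟨hμx, hνx⟩ : μ x = 0 ∧ ν x = 0 := Prod.ext_iff.mp hμν
    obtain ⟨p, hp, q, hq, rfl⟩ := Submodule.mem_sup.mp ((hd x).mp hdx)
    have hpQ : p ∈ Q := hμP p hp (by rwa [map_add, hμQ q hq, add_zero] at hμx)
    have hqP : q ∈ P := hνQ q hq (by rwa [map_add, hνP p hp, zero_add] at hνx)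
    have hρpq := LinearMap.congr_fun hρ ⟨p + q, P.add_mem hp hqP, Q.add_mem hpQ hq⟩
    exact congrArg Subtype.val (hρpq.symm.trans hρx)
  refine ⟨.ofInjectiveOfFinrankEq f hinj ?_, fun x hx => ⟨?_, hνP x hx⟩, fun x hx => ⟨?_, hμQ x hx⟩⟩
  · simp only [finrank_prod, Subspace.dual_finrank_eq]
    omega
  · exact (hd x).mpr (Submodule.mem_sup_left hx)
  · exact (hd x).mpr (Submodule.mem_sup_right hx)

/-- The form pairs `R = P ⊓ Q` with a complement `R'` of `P ⊔ Q`, and is nondegenerate on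
complements of `R` in `P` and in `Q`. -/
lemma exists_isEpsSymm_nondegenerate_orthogonal [FiniteDimensional K E] (hε : ε * ε = 1)
    (P Q : Submodule K E) (hdim : finrank K P + finrank K Q = finrank K E)
    (hP : ε = 1 ∨ Even (finrank K P + finrank K ↥(P ⊓ Q)))
    (hQ : ε = 1 ∨ Even (finrank K Q + finrank K ↥(P ⊓ Q))) :
    ∃ γ : LinearMap.BilinForm K E, IsEpsSymm ε γ ∧ γ.Nondegenerate ∧
      ∀ x ∈ P, ∀ y ∈ Q, γ x y = 0 := by
  obtain ⟨e, heP, heQ⟩ := exists_linearEquiv_adapted P Q hdim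
  have parity : ∀ (U T : Submodule K E),
      ε = 1 ∨ Even (finrank K U + finrank K ↥(U ⊓ T)) → ε = 1 ∨ Even (finrank K (U.map T.mkQ)) := by
    intro U T
    have := finrank_map_add_finrank_inf_ker T.mkQ U
    rw [Submodule.ker_mkQ] at this
    exact Or.imp_right fun ⟨c, hc⟩ => ⟨c - finrank K ↥(U ⊓ T), by omega⟩
  obtain ⟨γP, hγP, hγP'⟩ := exists_isEpsSymm_nondegenerate hε (parity P Q hP)
  obtain ⟨γQ, hγQ, hγQ'⟩ := exists_isEpsSymm_nondegenerate hε (parity Q P (inf_comm P Q ▸ hQ))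
  refine ⟨LinearMap.BilinForm.congr e.symm
      (orthogonalSum (hyperbolicForm _ ε) (orthogonalSum γP γQ)),
    ((isEpsSymm_hyperbolicForm hε).orthogonalSum (hγP.orthogonalSum hγQ)).congr _,
    (nondegenerate_orthogonalSum (nondegenerate_hyperbolicForm hε)
      (nondegenerate_orthogonalSum hγP' hγQ')).congr _, fun x hx y hy => ?_⟩
  simp [orthogonalSum_apply, hyperbolicForm_apply, heP x hx, heQ y hy]

end Forms

section SkewAdjoint

variable {K V : Type*} [Field K] [AddCommGroup V] [Module K V]
  {β : LinearMap.BilinForm K V} {W : Submodule K V} {π : End K V} {ε : K}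

lemma map_eq_inf_range_of_isIdempotentElem (hπ : IsIdempotentElem π)
    (hπW : π ∈ invariantSubalgebra W) : W.map π = W ⊓ LinearMap.range π := by
  refine le_antisymm (le_inf (Submodule.map_le_iff_le_comap.mpr hπW) LinearMap.map_le_range) ?_
  rintro _ ⟨hw, v, rfl⟩
  exact ⟨π v, hw, LinearMap.congr_fun hπ v⟩

lemma orthogonal_map_of_isSelfAdjoint (hadj : β.IsSelfAdjoint π) :
    β.orthogonal (W.map π) = (β.orthogonal W).comap π := by
  ext x
  simp only [LinearMap.BilinForm.mem_orthogonal_iff, Submodule.mem_comap, Submodule.mem_map,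
    forall_exists_index, and_imp, forall_apply_eq_imp_iff₂]
  exact forall₂_congr fun w _ => by rw [hadj]

lemma isOrthogonal_one_sub_two_mul (hπ : IsIdempotentElem π) (hadj : β.IsSelfAdjoint π) :
    β.IsOrthogonal (1 - 2 * π : End K V) := by
  have hππ : ∀ x y, β (π x) (π y) = β (π x) y := fun x y => by
    rw [← hadj, ← End.mul_apply, hπ.eq]
  intro x y
  simp only [two_mul, LinearMap.sub_apply, LinearMap.add_apply, End.one_apply,
    map_sub, map_add, hππ, ← hadj x y]
  ring

lemma one_sub_two_mul_mul_self (hπ : IsIdempotentElem π) : (1 - 2 * π) * (1 - 2 * π) = 1 := by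
  have h := hπ.eq
  simp only [two_mul, sub_mul, mul_sub, add_mul, mul_add, one_mul, mul_one, h]
  abel

variable [FiniteDimensional K V]

lemma exists_isIdempotentElem_mem_specialStabilizer [NeZero (2 : K)]
    (hβ : β.Nondegenerate) (hrefl : β.IsRefl) {g : End K V} (hg : g ∈ specialStabilizer β W) :
    ∃ π : End K V, IsIdempotentElem π ∧ β.IsSelfAdjoint π ∧ π ∈ invariantSubalgebra W ∧
      π ∈ invariantSubalgebra (β.orthogonal W) ∧ 1 - 2 * π ∈ specialStabilizer β W ∧
      IsUnit (1 + g * (1 - 2 * π)) := by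
  obtain ⟨horth, hdet, hgW⟩ := hg
  obtain ⟨π, hπmem, hπ, hadj, hunit⟩ := exists_isSelfAdjoint_idempotent hrefl horth
  have hadjoin : ∀ {U : Submodule K V}, g ∈ invariantSubalgebra U → π ∈ invariantSubalgebra U :=
    fun hgU => Algebra.adjoin_le (Set.singleton_subset_iff.mpr hgU) hπmem
  have hτ := isOrthogonal_one_sub_two_mul hπ hadj
  have hdetτ : LinearMap.det (1 - 2 * π) = 1 := by
    rw [← one_mul (LinearMap.det _), ← hdet, ← map_mul]
    exact (det_eq_one_of_isUnit_one_add hβ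
      (fun x y => (horth ((1 - 2 * π) x) ((1 - 2 * π) y)).trans (hτ x y)) hunit).trans hdet.symm
  exact ⟨π, hπ, hadj, hadjoin hgW, hadjoin (mem_invariantSubalgebra_orthogonal
    (isUnit_of_isOrthogonal hβ horth) horth hgW), ⟨hτ, hdetτ,
    sub_mem (one_mem _) (mul_mem (ofNat_mem _ 2) (hadjoin hgW))⟩, hunit⟩

lemma det_one_sub_two_mul_of_isIdempotentElem (hπ : IsIdempotentElem π) :
    LinearMap.det (1 - 2 * π) = (-1 : K) ^ finrank K (LinearMap.range π) := by
  have hproj := LinearMap.IsIdempotentElem.isProj_range π hπ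
  set e := (LinearMap.range π).prodEquivOfIsCompl (LinearMap.ker π) hproj.isCompl
  have hconj : π = e.conj (.prodMap .id 0) := hproj.eq_conj_prodMap
  have hblocks : (-LinearMap.id).prodMap LinearMap.id =
      LinearMap.id - ((LinearMap.prodMap .id 0) + (LinearMap.prodMap .id 0) :
        End K (LinearMap.range π × LinearMap.ker π)) := by
    ext <;> simp
  have h : 1 - 2 * π = e.conj ((-LinearMap.id).prodMap LinearMap.id) := by
    rw [hblocks, map_sub, map_add, ← hconj, e.conj_id, two_mul, End.one_eq_id]
  rw [h, LinearEquiv.conj_apply, LinearMap.comp_assoc, LinearMap.det_conj, LinearMap.det_prodMap,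
    ← neg_one_smul K LinearMap.id, LinearMap.det_smul, LinearMap.det_id, LinearMap.det_id, mul_one,
    mul_one]

lemma finrank_inf_range_add_finrank_orthogonal_inf_range (hβ : β.Nondegenerate)
    (hπ : IsIdempotentElem π) (hadj : β.IsSelfAdjoint π) (hπW : π ∈ invariantSubalgebra W) :
    finrank K ↥(W ⊓ LinearMap.range π) + finrank K ↥(β.orthogonal W ⊓ LinearMap.range π) =
      finrank K (LinearMap.range π) := by
  have hperp := LinearMap.BilinForm.finrank_orthogonal hβ (W.map π)
  have hle := (W.map π).finrank_le
  have hcomap := finrank_map_add_finrank_inf_ker π ((β.orthogonal W).comap π)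
  have hker : (β.orthogonal W).comap π ⊓ LinearMap.ker π = LinearMap.ker π :=
    inf_eq_right.mpr (LinearMap.ker_le_comap π)
  rw [Submodule.map_comap_eq, inf_comm, hker] at hcomap
  rw [orthogonal_map_of_isSelfAdjoint hadj] at hperp
  have hrank := LinearMap.finrank_range_add_finrank_ker π
  rw [← map_eq_inf_range_of_isIdempotentElem hπ hπW]
  omega

/-- The skew-adjoint endomorphism `X` defined by `β (X x) y = γ (π x) (π y)`. -/
lemma exists_isSkewAdjoint_of_form (hβ : β.Nondegenerate) (hsymm : IsEpsSymm ε β)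
    (hπ : IsIdempotentElem π) (hadj : β.IsSelfAdjoint π)
    {γ : LinearMap.BilinForm K (LinearMap.range π)} (hγ : IsEpsSymm (-ε) γ)
    (hγnd : γ.Nondegenerate)
    (hγW : ∀ x y : LinearMap.range π, (x : V) ∈ W → (y : V) ∈ β.orthogonal W → γ x y = 0)
    (hπW : π ∈ invariantSubalgebra W) (hπW' : π ∈ invariantSubalgebra (β.orthogonal W)) :
    ∃ X ∈ invariantSubalgebra W, β.IsSkewAdjoint X ∧ π * X = X ∧
      ∀ s : K, s ≠ 0 → IsUnit (1 - π + s • X) := by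
  obtain ⟨X, hX⟩ : ∃ X : End K V, ∀ x y, β (X x) y = γ (π.rangeRestrict x) (π.rangeRestrict y) :=
    ⟨(β.toDual hβ).symm ∘ₗ (γ.compl₁₂ π.rangeRestrict π.rangeRestrict : V →ₗ[K] Dual K V),
      fun x y => LinearMap.BilinForm.apply_toDual_symm_apply (hB := hβ) _ _⟩
  have hππ : ∀ v, π (π v) = π v := LinearMap.congr_fun hπ
  have hρπ : ∀ v, π.rangeRestrict (π v) = π.rangeRestrict v := fun v => Subtype.ext (hππ v)
  have hπX : π * X = X := by
    refine LinearMap.ext fun x => sub_eq_zero.mp (hβ.1 _ fun y => ?_)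
    rw [LinearMap.map_sub₂, End.mul_apply, hadj, hX, hX, hρπ, sub_self]
  refine ⟨X, fun w hw => ?_, fun x y => ?_, hπX, fun s hs => isUnit_of_injective ?_⟩
  · rw [← LinearMap.BilinForm.orthogonal_orthogonal hβ hsymm.isRefl W]
    exact fun y hy => hsymm.isRefl _ _ ((hX w y).trans (hγW _ _ (hπW w hw) (hπW' y hy)))
  · rw [Pi.neg_apply, map_neg, hsymm x, hX, hX, hγ]
    ring
  · refine (injective_iff_map_eq_zero _).mpr fun v hv => ?_
    have hv' : v - π v + s • X v = 0 := hv
    have hXv : X v = 0 := by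
      have h := congrArg π hv'
      rw [map_add, map_sub, hππ, sub_self, zero_add, map_smul, ← End.mul_apply, hπX,
        map_zero] at h
      exact (smul_eq_zero.mp h).resolve_left hs
    have hρv : π.rangeRestrict v = 0 := hγnd.1 _ fun y => by
      obtain ⟨y, rfl⟩ := π.surjective_rangeRestrict y
      rw [← hX, hXv, LinearMap.map_zero₂]
    have hπv : π v = 0 := congrArg Subtype.val hρv
    simpa [hXv, hπv] using hv'

/-- The parity of `dim (W^⊥ ∩ im π) + dim (W ∩ W^⊥ ∩ im π)` is controlled by the two hypotheses
because `dim (W ∩ im π) + dim (W^⊥ ∩ im π) = dim (im π)`. -/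
lemma exists_isSkewAdjoint (hε : ε * ε = 1) (hβ : β.Nondegenerate) (hsymm : IsEpsSymm ε β)
    (hπ : IsIdempotentElem π) (hadj : β.IsSelfAdjoint π)
    (hπW : π ∈ invariantSubalgebra W) (hπW' : π ∈ invariantSubalgebra (β.orthogonal W))
    (hrange : Even (finrank K (LinearMap.range π)))
    (hW : ε = -1 ∨ Even (finrank K ↥(W ⊓ LinearMap.range π) +
      finrank K ↥(W ⊓ β.orthogonal W ⊓ LinearMap.range π))) :
    ∃ X ∈ invariantSubalgebra W, β.IsSkewAdjoint X ∧ π * X = X ∧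
      ∀ s : K, s ≠ 0 → IsUnit (1 - π + s • X) := by
  let E := LinearMap.range π
  have hfin : ∀ U : Submodule K V,
      finrank K ↥(U.comap E.subtype) = finrank K ↥(U ⊓ E) := fun U => by
    rw [← Submodule.finrank_map_subtype_eq, Submodule.map_comap_subtype, inf_comm]
  have hdim := finrank_inf_range_add_finrank_orthogonal_inf_range hβ hπ hadj hπW
  obtain ⟨γ, hγ, hγnd, hγW⟩ := exists_isEpsSymm_nondegenerate_orthogonal (ε := -ε)
    (by rw [neg_mul_neg, hε]) (W.comap E.subtype) ((β.orthogonal W).comap E.subtype)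
    (by rw [hfin, hfin, hdim])
    (by rw [← Submodule.comap_inf, hfin, hfin]; exact hW.imp_left neg_eq_iff_eq_neg.mpr)
    (by
      rw [← Submodule.comap_inf, hfin, hfin]
      refine hW.imp neg_eq_iff_eq_neg.mpr fun h => ?_
      rw [← hdim, Nat.even_add] at hrange
      rwa [Nat.even_add, ← hrange, ← Nat.even_add])
  exact exists_isSkewAdjoint_of_form hβ hsymm hπ hadj hγ hγnd
    (fun x y hx hy => hγW x hx y hy) hπW hπW'

/-- `h` is the Cayley transform `(1 - X) (1 + X)⁻¹`. -/
lemma exists_mem_specialStabilizer_isUnit [NeZero (2 : K)] (hβ : β.Nondegenerate)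
    {X : End K V} (hXW : X ∈ invariantSubalgebra W) (hX : β.IsSkewAdjoint X) (hπX : π * X = X)
    (hu : IsUnit (1 + X)) (huπ : IsUnit (1 - π + X)) :
    ∃ h ∈ specialStabilizer β W, IsUnit (1 + h) ∧ IsUnit (1 + (1 - 2 * π) * h) := by
  have h2 : IsUnit (2 : End K V) := by
    simpa only [map_ofNat] using (IsUnit.mk0 (2 : K) two_ne_zero).map (algebraMap K (End K V))
  obtain ⟨N, hN⟩ := hu
  have hcancel : (1 - X) * ↑N⁻¹ * (1 + X) = 1 - X := by rw [← hN, Units.inv_mul_cancel_right]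
  have hsum : (1 + X) + (1 - X) = 2 := by rw [add_add_sub_cancel, one_add_one_eq_two]
  refine ⟨(1 - X) * ↑N⁻¹, mem_specialStabilizer_of_mul_eq hβ hcancel (hN ▸ N.isUnit)
    (hsum ▸ h2) (sub_mem (one_mem _) hXW) (add_mem (one_mem _) hXW) fun x y => ?_, ?_, ?_⟩
  · have hskew : β x (X y) = -β (X x) y := by
      rw [hX x y, Pi.neg_apply, map_neg, neg_neg]
    simp only [LinearMap.sub_apply, LinearMap.add_apply, End.one_apply, map_sub, map_add, hskew]
    ring
  · refine isUnit_of_mul_isUnit_left (y := 1 + X) ?_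
    rw [add_mul, one_mul, hcancel, hsum]
    exact h2
  · refine isUnit_of_mul_isUnit_left (y := 1 + X) ?_
    have : (1 + (1 - 2 * π) * ((1 - X) * ↑N⁻¹)) * (1 + X) = 2 * (1 - π + X) := by
      rw [add_mul, one_mul, mul_assoc, hcancel]
      simp only [two_mul, sub_mul, mul_sub, add_mul, mul_one, one_mul, hπX]
      abel
    exact this ▸ h2.mul huπ

lemma finite_setOf_not_isUnit_add_smul {A : End K V} (hA : IsUnit A) (B : End K V) :
    {t : K | ¬IsUnit (A + t • B)}.Finite := by
  obtain ⟨u, rfl⟩ := hA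
  refine ((End.finite_spectrum (-((↑u⁻¹ : End K V) * B))).preimage inv_injective.injOn).subset
    fun t ht hspec => ht ?_
  rcases eq_or_ne t 0 with rfl | h0
  · rw [zero_smul, add_zero]
    exact u.isUnit
  · have hfac : (u : End K V) + t • B =
        algebraMap K (End K V) t * (u * (algebraMap K (End K V) t⁻¹ - -(↑u⁻¹ * B))) := by
      rw [sub_neg_eq_add, mul_add, u.mul_inv_cancel_left, mul_add, ← Algebra.commutes t⁻¹,
        ← mul_assoc, ← map_mul, mul_inv_cancel₀ h0, map_one, one_mul, Algebra.smul_def]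
    rw [hfac]
    exact ((IsUnit.mk0 t h0).map _).mul (u.isUnit.mul hspec)

lemma exists_mem_specialStabilizer_isUnit_of_even [Infinite K] [NeZero (2 : K)] (hε : ε * ε = 1)
    (hβ : β.Nondegenerate) (hsymm : IsEpsSymm ε β) (hπ : IsIdempotentElem π)
    (hadj : β.IsSelfAdjoint π) (hπW : π ∈ invariantSubalgebra W)
    (hπW' : π ∈ invariantSubalgebra (β.orthogonal W))
    (hrange : Even (finrank K (LinearMap.range π)))
    (hW : ε = -1 ∨ Even (finrank K ↥(W ⊓ LinearMap.range π) +
      finrank K ↥(W ⊓ β.orthogonal W ⊓ LinearMap.range π))) :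
    ∃ h ∈ specialStabilizer β W, IsUnit (1 + h) ∧ IsUnit (1 + (1 - 2 * π) * h) := by
  obtain ⟨X, hXW, hX, hπX, hXu⟩ :=
    exists_isSkewAdjoint hε hβ hsymm hπ hadj hπW hπW' hrange hW
  obtain ⟨s, hs⟩ :=
    ((finite_setOf_not_isUnit_add_smul isUnit_one X).insert 0).infinite_compl.nonempty
  obtain ⟨hs0, hsX⟩ := not_or.mp hs
  exact exists_mem_specialStabilizer_isUnit hβ (Subalgebra.smul_mem _ hXW s)
    ((LinearMap.mem_skewAdjointSubmodule _).mp (Submodule.smul_mem _ s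
      ((LinearMap.mem_skewAdjointSubmodule _).mpr hX)))
    (by rw [mul_smul_comm, hπX]) (not_not.mp hsX) (hXu s hs0)

end SkewAdjoint

section Sign

variable {K V M : Type*} [Field K] [AddCommGroup V] [Module K V] [AddCommGroup M] [Module K M]

/-- A presentation of the subquotient `W / R` of `V` by a space `M`: the map `p` restricts on `W`
to a surjection with kernel `R`, and `ι` is a section of it. Since `p` is defined on all of `V`,
the action of an endomorphism `a` of `V` on `W / R` is `p ∘ₗ a ∘ₗ ι`. -/
structure IsSubquotient (W R : Submodule K V) (ι : M →ₗ[K] V) (p : V →ₗ[K] M) : Prop where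
  apply_section : ∀ m, p (ι m) = m
  section_mem : ∀ m, ι m ∈ W
  eq_zero_iff : ∀ w ∈ W, p w = 0 ↔ w ∈ R

/-- The determinant of the action of `a` on the subquotient presented by `ι` and `p`. -/
noncomputable def subquotientDet (ι : M →ₗ[K] V) (p : V →ₗ[K] M) (a : End K V) : K :=
  LinearMap.det (p ∘ₗ a ∘ₗ ι)

variable {W R : Submodule K V} {ι : M →ₗ[K] V} {p : V →ₗ[K] M}

lemma exists_isSubquotient (W R : Submodule K V) :
    ∃ (ι : (W ⧸ R.comap W.subtype) →ₗ[K] V) (p : V →ₗ[K] W ⧸ R.comap W.subtype),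
      IsSubquotient W R ι p := by
  obtain ⟨σ, hσ⟩ := (R.comap W.subtype).mkQ.exists_rightInverse_of_surjective
    (Submodule.range_mkQ _)
  obtain ⟨p, hp⟩ := (R.comap W.subtype).mkQ.exists_extend
  have hpW : ∀ w : W, p w = (R.comap W.subtype).mkQ w := LinearMap.congr_fun hp
  refine ⟨W.subtype ∘ₗ σ, p, fun m => ?_, fun m => (σ m).2, fun w hw => ?_⟩
  · exact (hpW (σ m)).trans (LinearMap.congr_fun hσ m)
  · rw [hpW ⟨w, hw⟩, Submodule.mkQ_apply, Submodule.Quotient.mk_eq_zero]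
    rfl

namespace IsSubquotient

variable (h : IsSubquotient W R ι p)
include h

lemma section_apply_sub_mem {w : V} (hw : w ∈ W) : ι (p w) - w ∈ R :=
  (h.eq_zero_iff _ (sub_mem (h.section_mem _) hw)).mp (by rw [map_sub, h.apply_section, sub_self])

lemma apply_section_apply (hRW : R ≤ W) {a : End K V} (haR : a ∈ invariantSubalgebra R)
    {w : V} (hw : w ∈ W) : p (a (ι (p w))) = p (a w) := by
  have hmem := haR _ (h.section_apply_sub_mem hw)
  rw [map_sub] at hmem
  rw [← sub_eq_zero, ← map_sub]
  exact (h.eq_zero_iff _ (hRW hmem)).mpr hmem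

lemma comp_mul (hRW : R ≤ W) {a b : End K V} (haR : a ∈ invariantSubalgebra R)
    (hbW : b ∈ invariantSubalgebra W) :
    p ∘ₗ (a * b) ∘ₗ ι = (p ∘ₗ a ∘ₗ ι) * (p ∘ₗ b ∘ₗ ι) :=
  LinearMap.ext fun m => (h.apply_section_apply hRW haR (hbW _ (h.section_mem m))).symm

lemma comp_one : p ∘ₗ (1 : End K V) ∘ₗ ι = 1 :=
  LinearMap.ext h.apply_section

lemma finrank_range_comp [FiniteDimensional K V] (hRW : R ≤ W) {π : End K V}
    (hπ : IsIdempotentElem π)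
    (hπW : π ∈ invariantSubalgebra W) (hπR : π ∈ invariantSubalgebra R) :
    finrank K (LinearMap.range (p ∘ₗ π ∘ₗ ι)) + finrank K ↥(R ⊓ LinearMap.range π) =
      finrank K ↥(W ⊓ LinearMap.range π) := by
  have hrange : LinearMap.range (p ∘ₗ π ∘ₗ ι) = (W ⊓ LinearMap.range π).map p := by
    rw [← map_eq_inf_range_of_isIdempotentElem hπ hπW]
    refine le_antisymm ?_ ?_
    · rintro _ ⟨m, rfl⟩
      exact ⟨_, ⟨_, h.section_mem m, rfl⟩, rfl⟩
    · rintro _ ⟨_, ⟨w, hw, rfl⟩, rfl⟩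
      exact ⟨p w, h.apply_section_apply hRW hπR hw⟩
  have hker : W ⊓ LinearMap.range π ⊓ LinearMap.ker p = R ⊓ LinearMap.range π := by
    ext x
    simp only [Submodule.mem_inf, LinearMap.mem_ker]
    constructor
    · rintro ⟨⟨hx, hxE⟩, h0⟩
      exact ⟨(h.eq_zero_iff x hx).mp h0, hxE⟩
    · rintro ⟨hx, hxE⟩
      exact ⟨⟨hRW hx, hxE⟩, (h.eq_zero_iff x (hRW hx)).mpr hx⟩
  rw [hrange, ← hker, finrank_map_add_finrank_inf_ker]

lemma subquotientDet_one : subquotientDet ι p 1 = 1 := by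
  rw [subquotientDet, h.comp_one, map_one]

lemma subquotientDet_mul (hRW : R ≤ W) {a b : End K V} (haR : a ∈ invariantSubalgebra R)
    (hbW : b ∈ invariantSubalgebra W) :
    subquotientDet ι p (a * b) = subquotientDet ι p a * subquotientDet ι p b := by
  rw [subquotientDet, h.comp_mul hRW haR hbW, map_mul]
  rfl

lemma subquotientDet_one_sub_two_mul [FiniteDimensional K M] (hRW : R ≤ W) {π : End K V}
    (hπ : IsIdempotentElem π)
    (hπW : π ∈ invariantSubalgebra W) (hπR : π ∈ invariantSubalgebra R) :
    subquotientDet ι p (1 - 2 * π) = (-1) ^ finrank K (LinearMap.range (p ∘ₗ π ∘ₗ ι)) := by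
  have hidem : IsIdempotentElem (p ∘ₗ π ∘ₗ ι) := by
    rw [IsIdempotentElem, ← h.comp_mul hRW hπR hπW, hπ.eq]
  rw [← det_one_sub_two_mul_of_isIdempotentElem hidem, subquotientDet]
  congr 1
  ext m
  simp [two_mul, h.apply_section]

lemma subquotientDet_transvection [FiniteDimensional K M] {f : Dual K V} {w : V}
    (hf : f (ι (p w)) = f w) :
    subquotientDet ι p (LinearMap.transvection f w) = 1 + f w := by
  have hcomp : p ∘ₗ LinearMap.transvection f w ∘ₗ ι = LinearMap.transvection (f ∘ₗ ι) (p w) := by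
    ext m
    simp [LinearMap.transvection.apply, h.apply_section]
  rw [subquotientDet, hcomp, LinearMap.transvection.det, LinearMap.comp_apply, hf]

end IsSubquotient

variable {β : LinearMap.BilinForm K V}

lemma subquotientDet_mul_self [FiniteDimensional K M] (hβ : β.IsRefl)
    (h : IsSubquotient W (W ⊓ β.orthogonal W) ι p) {a : End K V} (ha : β.IsOrthogonal a)
    (haW : a ∈ invariantSubalgebra W) :
    subquotientDet ι p a * subquotientDet ι p a = 1 := by
  have hform : ∀ x ∈ W, ∀ y ∈ W, β (ι (p x)) (ι (p y)) = β x y := fun x hx y hy => by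
    have hx' := hβ _ _ ((h.section_apply_sub_mem hx).2 _ hy)
    have hy' := hβ _ _ (hβ _ _ ((h.section_apply_sub_mem hy).2 _ (h.section_mem (p x))))
    rw [LinearMap.map_sub₂, sub_eq_zero] at hx'
    rw [map_sub, sub_eq_zero] at hy'
    rw [hy', hx']
  let δ : LinearMap.BilinForm K M := β.compl₁₂ ι ι
  have hδrefl : δ.IsRefl := fun x y => hβ _ _
  have hδ : δ.Nondegenerate := by
    refine hδrefl.nondegenerate_iff_separatingLeft.mpr fun m hm => ?_
    refine (h.apply_section m).symm.trans ((h.eq_zero_iff _ (h.section_mem m)).mpr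
      ⟨h.section_mem m, fun w hw => hβ _ _ ?_⟩)
    rw [← hform _ (h.section_mem m) _ hw, h.apply_section]
    exact hm (p w)
  refine det_mul_det_of_isOrthogonal hδ fun x y => ?_
  exact (hform _ (haW _ (h.section_mem x)) _ (haW _ (h.section_mem y))).trans (ha _ _)

lemma exists_mem_apply_self_ne_zero [NeZero (2 : K)] (hsymm : β.IsSymm)
    (hW : ¬W ≤ β.orthogonal W) : ∃ w ∈ W, β w w ≠ 0 := by
  have := invertibleOfNonzero (two_ne_zero (α := K))
  obtain ⟨⟨w, hw⟩, hne⟩ := LinearMap.BilinForm.exists_bilinForm_self_ne_zero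
    (B := β.restrict W) (fun h0 => hW fun x hx y hy => by
      exact LinearMap.congr_fun₂ h0 ⟨y, hy⟩ ⟨x, hx⟩) ⟨fun x y => hsymm.eq x y⟩
  exact ⟨w, hw, hne⟩

/-- The orthogonal reflection in the hyperplane `w^⊥`, for `β w w ≠ 0`. -/
def hyperplaneReflection (β : LinearMap.BilinForm K V) (w : V) : End K V :=
  LinearMap.transvection (-(2 / β w w) • β w) w

lemma hyperplaneReflection_apply (w x : V) :
    hyperplaneReflection β w x = x - (2 / β w w * β w x) • w := by
  simp [hyperplaneReflection, LinearMap.transvection.apply, sub_eq_add_neg]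

lemma isOrthogonal_hyperplaneReflection (hsymm : β.IsSymm) {w : V} (hw : β w w ≠ 0) :
    β.IsOrthogonal (hyperplaneReflection β w) := fun x y => by
  simp only [hyperplaneReflection_apply, map_sub, map_smul, LinearMap.sub_apply,
    LinearMap.smul_apply, smul_eq_mul, ← hsymm.eq w x]
  field_simp
  ring

lemma hyperplaneReflection_coeff_apply {w : V} (hw : β w w ≠ 0) :
    1 + (-(2 / β w w) • β w) w = -1 := by
  rw [LinearMap.smul_apply, smul_eq_mul, neg_mul, div_mul_cancel₀ _ hw]
  norm_num

lemma det_hyperplaneReflection [FiniteDimensional K V] {w : V} (hw : β w w ≠ 0) :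
    LinearMap.det (hyperplaneReflection β w) = -1 := by
  rw [hyperplaneReflection, LinearMap.transvection.det, hyperplaneReflection_coeff_apply hw]

lemma hyperplaneReflection_mem_invariantSubalgebra {w : V} (hw : w ∈ W) :
    hyperplaneReflection β w ∈ invariantSubalgebra W := fun x hx => by
  rw [hyperplaneReflection_apply]
  exact sub_mem hx (W.smul_mem _ hw)

lemma hyperplaneReflection_apply_of_mem_orthogonal (hβ : β.IsRefl) {u : V}
    (hu : u ∈ β.orthogonal W) {x : V} (hx : x ∈ W) : hyperplaneReflection β u x = x := by
  rw [hyperplaneReflection_apply, hβ _ _ (hu x hx), mul_zero, zero_smul, sub_zero]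

lemma subquotientDet_hyperplaneReflection [FiniteDimensional K M]
    (h : IsSubquotient W (W ⊓ β.orthogonal W) ι p) {w : V} (hwW : w ∈ W) (hw : β w w ≠ 0) :
    subquotientDet ι p (hyperplaneReflection β w) = -1 := by
  have hpw : β w (ι (p w)) = β w w := by
    rw [← sub_eq_zero, ← map_sub]
    exact (h.section_apply_sub_mem hwW).2 w hwW
  rw [hyperplaneReflection, h.subquotientDet_transvection, hyperplaneReflection_coeff_apply hw]
  rw [LinearMap.smul_apply, LinearMap.smul_apply, hpw]

/-- The element is a product of reflections in a vector of `W` and in a vector of `W^⊥`. -/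
lemma exists_mem_specialStabilizer_subquotientDet_eq_neg_one [FiniteDimensional K V]
    [FiniteDimensional K M] [NeZero (2 : K)] (hβ : β.Nondegenerate) (hsymm : β.IsSymm)
    (h : IsSubquotient W (W ⊓ β.orthogonal W) ι p)
    (hW : ¬W ≤ β.orthogonal W) (hW' : ¬β.orthogonal W ≤ W) :
    ∃ a ∈ specialStabilizer β W, subquotientDet ι p a = -1 := by
  have hrefl := hsymm.isRefl
  obtain ⟨w, hwW, hw⟩ := exists_mem_apply_self_ne_zero hsymm hW
  obtain ⟨u, huW, hu⟩ := exists_mem_apply_self_ne_zero hsymm (W := β.orthogonal W)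
    (by rwa [LinearMap.BilinForm.orthogonal_orthogonal hβ hrefl])
  have hfix := fun x => hyperplaneReflection_apply_of_mem_orthogonal hrefl huW (x := x)
  refine ⟨hyperplaneReflection β w * hyperplaneReflection β u, ⟨fun x y => ?_, ?_, ?_⟩, ?_⟩
  · exact (isOrthogonal_hyperplaneReflection hsymm hw _ _).trans
      (isOrthogonal_hyperplaneReflection hsymm hu x y)
  · rw [map_mul, det_hyperplaneReflection hw, det_hyperplaneReflection hu, neg_one_mul, neg_neg]
  · exact mul_mem (hyperplaneReflection_mem_invariantSubalgebra hwW)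
      fun x hx => (hfix x hx).symm ▸ hx
  · rw [← subquotientDet_hyperplaneReflection h hwW hw, subquotientDet, subquotientDet]
    congr 1
    exact LinearMap.ext fun m =>
      congrArg (fun x => p (hyperplaneReflection β w x)) (hfix _ (h.section_mem m))

lemma even_of_neg_one_pow_eq_one [NeZero (2 : K)] {j : ℕ} (hj : (-1 : K) ^ j = 1) : Even j := by
  refine (neg_one_pow_eq_one_iff_even fun h => two_ne_zero (α := K) ?_).mp hj
  rw [← one_add_one_eq_two, ← neg_eq_iff_add_eq_zero, h]

lemma even_finrank_range [FiniteDimensional K V] [NeZero (2 : K)] {π : End K V}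
    (hπ : IsIdempotentElem π) (hdet : LinearMap.det (1 - 2 * π) = 1) :
    Even (finrank K (LinearMap.range π)) := by
  rw [det_one_sub_two_mul_of_isIdempotentElem hπ] at hdet
  exact even_of_neg_one_pow_eq_one hdet

lemma even_finrank_inf_range_add [FiniteDimensional K V] [FiniteDimensional K M] [NeZero (2 : K)]
    (hβ : β.Nondegenerate) (h : IsSubquotient W (W ⊓ β.orthogonal W) ι p) {π : End K V}
    (hπ : IsIdempotentElem π) (hadj : β.IsSelfAdjoint π) (hπW : π ∈ invariantSubalgebra W)
    (hπW' : π ∈ invariantSubalgebra (β.orthogonal W)) (hdet : LinearMap.det (1 - 2 * π) = 1)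
    (hsign : W ≤ β.orthogonal W ∨ β.orthogonal W ≤ W ∨ subquotientDet ι p (1 - 2 * π) = 1) :
    Even (finrank K ↥(W ⊓ LinearMap.range π) +
      finrank K ↥(W ⊓ β.orthogonal W ⊓ LinearMap.range π)) := by
  rcases hsign with hW | hW | hsign
  · rw [inf_eq_left.mpr hW]
    exact Even.add_self _
  · rw [inf_eq_right.mpr hW, finrank_inf_range_add_finrank_orthogonal_inf_range hβ hπ hadj hπW]
    exact even_finrank_range hπ hdet
  · have hπR : π ∈ invariantSubalgebra (W ⊓ β.orthogonal W) := fun x hx =>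
      ⟨hπW x hx.1, hπW' x hx.2⟩
    rw [h.subquotientDet_one_sub_two_mul inf_le_left hπ hπW hπR] at hsign
    rw [← h.finrank_range_comp inf_le_left hπ hπW hπR, add_assoc]
    exact (even_of_neg_one_pow_eq_one hsign).add (Even.add_self _)

end Sign

section ConnectedComponents

variable {X Y : Type*} [TopologicalSpace X] [TopologicalSpace Y]

lemma natCard_connectedComponents_eq [TotallyDisconnectedSpace Y] {f : X → Y} (hf : Continuous f)
    (hsurj : Function.Surjective f)
    (hinj : ∀ x y, f x = f y → (x : ConnectedComponents X) = y) :
    Nat.card (ConnectedComponents X) = Nat.card Y := by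
  refine Nat.card_eq_of_bijective hf.connectedComponentsLift ⟨?_, fun y => ?_⟩
  · rw [Function.Injective, ConnectedComponents.surjective_coe.forall₂]
    exact hinj
  · obtain ⟨x, rfl⟩ := hsurj y
    exact ⟨x, hf.connectedComponentsLift_apply_coe x⟩

lemma connectedComponents_coe_eq_of_joined {x y : X} (h : Joined x y) :
    (x : ConnectedComponents X) = y :=
  ConnectedComponents.coe_eq_coe'.mpr (pathComponent_subset_component y h.symm)

lemma natCard_connectedComponents_eq_of_retraction {r : X → Y} {s : Y → X} (hr : Continuous r)
    (hs : Continuous s) (hrs : Function.RightInverse s r) (hsr : ∀ x, Joined x (s (r x))) :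
    Nat.card (ConnectedComponents X) = Nat.card (ConnectedComponents Y) := by
  refine natCard_connectedComponents_eq (ConnectedComponents.continuous_coe.comp hr)
    (ConnectedComponents.surjective_coe.comp hrs.surjective) fun x y hxy => ?_
  rw [connectedComponents_coe_eq_of_joined (hsr x), connectedComponents_coe_eq_of_joined (hsr y)]
  exact congrArg hs.connectedComponentsMap hxy

lemma natCard_connectedComponents_pi {ι : Type*} [Fintype ι] {X : ι → Type*}
    [∀ i, TopologicalSpace (X i)] :
    Nat.card (ConnectedComponents (∀ i, X i)) = ∏ i, Nat.card (ConnectedComponents (X i)) := by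
  rw [← Nat.card_pi]
  refine natCard_connectedComponents_eq
    (f := fun (x : ∀ i, X i) i => (x i : ConnectedComponents (X i)))
    (continuous_pi fun i => ConnectedComponents.continuous_coe.comp (continuous_apply i))
    (Function.Surjective.piMap fun _ => ConnectedComponents.surjective_coe) fun x y hxy => ?_
  rw [ConnectedComponents.coe_eq_coe, connectedComponent_pi, connectedComponent_pi]
  exact congrArg (Set.univ.pi ·)
    (funext fun i => ConnectedComponents.coe_eq_coe.mp (congrFun hxy i))

end ConnectedComponents

section SpecialStabilizer

variable {V : Type*} [NormedAddCommGroup V] [NormedSpace ℂ V]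

/-- `specialStabilizer β W` as a set of continuous endomorphisms, which gives it a topology. -/
noncomputable def continuousSpecialStabilizer (β : LinearMap.BilinForm ℂ V) (W : Submodule ℂ V) :
    Submonoid (V →L[ℂ] V) :=
  (specialStabilizer β W).comap ContinuousLinearMap.toLinearMapRingHom

variable [FiniteDimensional ℂ V] {β : LinearMap.BilinForm ℂ V} {W : Submodule ℂ V} {ε : ℂ}
  {π : End ℂ V}

lemma isUnit_toLinearMap_iff {a : V →L[ℂ] V} : IsUnit (a : End ℂ V) ↔ IsUnit a :=
  MulEquiv.isUnit_map (f := (Module.End.toContinuousLinearMap V).symm)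

lemma joinedIn_mul {M : Type*} [Monoid M] [TopologicalSpace M] [ContinuousMul M]
    {S : Submonoid M} {a b c d : M} (hab : JoinedIn (S : Set M) a b)
    (hcd : JoinedIn (S : Set M) c d) : JoinedIn (S : Set M) (a * c) (b * d) :=
  (hab.mul hcd).mono (Submonoid.coe_mul_self_eq S).subset

lemma joinedIn_one_of_isUnit_one_add (hβ : β.Nondegenerate) {a : V →L[ℂ] V}
    (ha : a ∈ continuousSpecialStabilizer β W) (hu : IsUnit (1 + a)) :
    JoinedIn (continuousSpecialStabilizer β W : Set (V →L[ℂ] V)) 1 a := by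
  have : CompleteSpace V := FiniteDimensional.complete ℂ V
  let M : ℂ → V →L[ℂ] V := fun t => 1 + a + t • (a - 1)
  let N : ℂ → V →L[ℂ] V := fun t => 1 + a + t • (1 - a)
  have hM1 : M 1 = a * N 1 := by simp only [M, N, one_smul]; noncomm_ring
  have hN1 : N 1 = algebraMap ℂ _ 2 := by
    simp only [N, one_smul, map_ofNat, add_add_sub_cancel, one_add_one_eq_two]
  have huN1 : IsUnit (N 1) := hN1 ▸ (isUnit_iff_ne_zero.mpr two_ne_zero).map (algebraMap ℂ _)
  have huN0 : IsUnit (N 0) := by simpa [N] using hu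
  have hfin : {t | ¬IsUnit (N t)}.Finite :=
    (finite_setOf_not_isUnit_add_smul (isUnit_toLinearMap_iff.mpr hu)
      (1 - a : V →L[ℂ] V)).subset fun t => mt (isUnit_toLinearMap_iff (a := N t)).mp
  have hpath : IsPathConnected {t | ¬IsUnit (N t)}ᶜ :=
    hfin.countable.isPathConnected_compl_of_one_lt_rank (by simp)
  have hcont : ContinuousOn (fun t => M t * Ring.inverse (N t)) {t | ¬IsUnit (N t)}ᶜ := by
    intro t ht
    obtain ⟨u, hut⟩ := not_not.mp ht
    have hinv : ContinuousAt (fun t => Ring.inverse (N t)) t :=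
      ContinuousAt.comp (g := Ring.inverse) (hut ▸ NormedRing.inverse_continuousAt u)
        (by fun_prop)
    exact (ContinuousAt.mul (by fun_prop) hinv).continuousWithinAt
  have hjoin := (hpath.joinedIn 0 (not_not.mpr huN0) 1 (not_not.mpr huN1)).map_continuousOn hcont
  have hM0 : M 0 = N 0 := by simp [M, N]
  rw [hM1, mul_assoc, Ring.mul_inverse_cancel _ huN1, hM0, Ring.mul_inverse_cancel _ huN0,
    mul_one] at hjoin
  refine hjoin.mono (Set.image_subset_iff.mpr fun t ht => ?_)
  exact mem_specialStabilizer_of_mul_eq_one_add hβ ha (isUnit_toLinearMap_iff.mpr hu)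
    (isUnit_toLinearMap_iff.mpr (not_not.mp ht)) <| congrArg ContinuousLinearMap.toLinearMap <|
      Ring.inverse_mul_cancel_right _ _ (not_not.mp ht)

lemma joinedIn_of_isUnit_one_add_mul (hβ : β.Nondegenerate) (hπ : IsIdempotentElem π)
    (hτ : 1 - 2 * π ∈ specialStabilizer β W) {g : V →L[ℂ] V}
    (hg : g ∈ continuousSpecialStabilizer β W)
    (hu : IsUnit (1 + (g : End ℂ V) * (1 - 2 * π))) :
    JoinedIn (continuousSpecialStabilizer β W : Set (V →L[ℂ] V))
      (LinearMap.toContinuousLinearMap (1 - 2 * π)) g := by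
  let τ : V →L[ℂ] V := LinearMap.toContinuousLinearMap (1 - 2 * π)
  have hτ' : τ ∈ continuousSpecialStabilizer β W := hτ
  have hjoin := joinedIn_mul
    (joinedIn_one_of_isUnit_one_add hβ (mul_mem hg hτ') (isUnit_toLinearMap_iff.mp hu))
    (JoinedIn.refl hτ')
  have hττ : τ * τ = 1 :=
    ContinuousLinearMap.coe_injective (one_sub_two_mul_mul_self hπ)
  rwa [one_mul, mul_assoc, hττ, mul_one] at hjoin

lemma joinedIn_one_one_sub_two_mul (hε : ε * ε = 1) (hβ : β.Nondegenerate)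
    (hsymm : IsEpsSymm ε β) (hπ : IsIdempotentElem π) (hadj : β.IsSelfAdjoint π)
    (hπW : π ∈ invariantSubalgebra W) (hπW' : π ∈ invariantSubalgebra (β.orthogonal W))
    (hτ : 1 - 2 * π ∈ specialStabilizer β W)
    (hW : ε = -1 ∨ Even (finrank ℂ ↥(W ⊓ LinearMap.range π) +
      finrank ℂ ↥(W ⊓ β.orthogonal W ⊓ LinearMap.range π))) :
    JoinedIn (continuousSpecialStabilizer β W : Set (V →L[ℂ] V)) 1
      (LinearMap.toContinuousLinearMap (1 - 2 * π)) := by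
  obtain ⟨h, hh, hu, hτu⟩ := exists_mem_specialStabilizer_isUnit_of_even hε hβ hsymm hπ hadj hπW
    hπW' (even_finrank_range hπ hτ.2.1) hW
  let h' : V →L[ℂ] V := LinearMap.toContinuousLinearMap h
  have hh' : h' ∈ continuousSpecialStabilizer β W := hh
  let τ : V →L[ℂ] V := LinearMap.toContinuousLinearMap (1 - 2 * π)
  have hτ' : τ ∈ continuousSpecialStabilizer β W := hτ
  have h1 := joinedIn_one_of_isUnit_one_add hβ hh' (isUnit_toLinearMap_iff.mp hu)
  have h2 := joinedIn_one_of_isUnit_one_add hβ (mul_mem hτ' hh') (isUnit_toLinearMap_iff.mp hτu)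
  have h3 := joinedIn_mul (JoinedIn.refl hτ') h1
  rw [mul_one] at h3
  exact h2.trans h3.symm

variable {M : Type*} [AddCommGroup M] [Module ℂ M] [FiniteDimensional ℂ M] {ι : M →ₗ[ℂ] V}
  {p : V →ₗ[ℂ] M}

lemma continuous_subquotientDet (ι : M →ₗ[ℂ] V) (p : V →ₗ[ℂ] M) :
    Continuous fun a : V →L[ℂ] V => subquotientDet ι p a := by
  let b := finBasis ℂ M
  let f : (V →L[ℂ] V) →ₗ[ℂ] Matrix _ _ ℂ :=
    (LinearMap.toMatrix b b).toLinearMap ∘ₗ p.compRight ℂ ∘ₗ LinearMap.lcomp ℂ V ι ∘ₗ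
      ContinuousLinearMap.coeLM ℂ
  have hdet : ∀ a : V →L[ℂ] V, subquotientDet ι p a = (f a).det := fun a =>
    (LinearMap.det_toMatrix b _).symm
  simp only [hdet]
  exact f.continuous_of_finiteDimensional.matrix_det

lemma subquotientDet_eq_of_joinedIn (hβ : β.IsRefl)
    (h : IsSubquotient W (W ⊓ β.orthogonal W) ι p) {a b : V →L[ℂ] V}
    (hab : JoinedIn (continuousSpecialStabilizer β W : Set (V →L[ℂ] V)) a b) :
    subquotientDet ι p a = subquotientDet ι p b := by
  obtain ⟨γ, hγ⟩ := hab
  have hcont : Continuous fun t => subquotientDet ι p (γ t) :=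
    (continuous_subquotientDet ι p).comp γ.continuous
  have hrange : Set.range (fun t => subquotientDet ι p (γ t : V →L[ℂ] V)) ⊆ {1, -1} := by
    rintro _ ⟨t, rfl⟩
    exact mul_self_eq_one_iff.mp (subquotientDet_mul_self hβ h (hγ t).1 (hγ t).2.2)
  have hconst : (Set.range fun t => subquotientDet ι p (γ t : V →L[ℂ] V)).Subsingleton :=
    Set.not_nontrivial_iff.mp fun hne =>
      (isPreconnected_range hcont).infinite_of_nontrivial hne ((Set.toFinite _).subset hrange)
  simpa using hconst ⟨0, rfl⟩ ⟨1, rfl⟩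

lemma joinedIn_one (hε : ε * ε = 1) (hβ : β.Nondegenerate)
    (hsymm : IsEpsSymm ε β) (h : IsSubquotient W (W ⊓ β.orthogonal W) ι p) {g : V →L[ℂ] V}
    (hg : g ∈ continuousSpecialStabilizer β W)
    (hsign : ε = -1 ∨ W ≤ β.orthogonal W ∨ β.orthogonal W ≤ W ∨ subquotientDet ι p g = 1) :
    JoinedIn (continuousSpecialStabilizer β W : Set (V →L[ℂ] V)) 1 g := by
  obtain ⟨π, hπ, hadj, hπW, hπW', hτ, hu⟩ :=
    exists_isIdempotentElem_mem_specialStabilizer hβ hsymm.isRefl hg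
  have hτg := joinedIn_of_isUnit_one_add_mul hβ hπ hτ hg hu
  have hsign' := subquotientDet_eq_of_joinedIn hsymm.isRefl h hτg
  rw [← hsign'] at hsign
  exact (joinedIn_one_one_sub_two_mul hε hβ hsymm hπ hadj hπW hπW' hτ <| hsign.imp_right <|
    even_finrank_inf_range_add hβ h hπ hadj hπW hπW' hτ.2.1).trans hτg

lemma joinedIn_of_subquotientDet_eq (hβ : β.Nondegenerate) (hsymm : β.IsSymm)
    (h : IsSubquotient W (W ⊓ β.orthogonal W) ι p) {a b : V →L[ℂ] V}
    (ha : a ∈ continuousSpecialStabilizer β W) (hb : b ∈ continuousSpecialStabilizer β W)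
    (hab : subquotientDet ι p a = subquotientDet ι p b) :
    JoinedIn (continuousSpecialStabilizer β W : Set (V →L[ℂ] V)) a b := by
  obtain ⟨c, hc, hac⟩ := exists_mem_specialStabilizer_mul_eq_one hβ ha
  let c' : V →L[ℂ] V := LinearMap.toContinuousLinearMap c
  have hcb : c' * b ∈ continuousSpecialStabilizer β W := mul_mem hc hb
  have hacb : a * (c' * b) = b := by
    rw [← mul_assoc, show a * c' = 1 from ContinuousLinearMap.coe_injective hac, one_mul]
  have haR : (a : End ℂ V) ∈ invariantSubalgebra (W ⊓ β.orthogonal W) := fun w hw =>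
    ⟨ha.2.2 w hw.1, mem_invariantSubalgebra_orthogonal (isUnit_of_isOrthogonal hβ ha.1) ha.1
      ha.2.2 w hw.2⟩
  have hmul := h.subquotientDet_mul inf_le_left haR hcb.2.2
  have hsign : subquotientDet ι p (c' * b : V →L[ℂ] V) = 1 := by
    have hne := left_ne_zero_of_mul_eq_one (subquotientDet_mul_self hsymm.isRefl h ha.1 ha.2.2)
    refine (mul_eq_left₀ hne).mp (hmul.symm.trans (Eq.trans ?_ hab.symm))
    exact congrArg (fun g : V →L[ℂ] V => subquotientDet ι p g) hacb
  have hjoin := joinedIn_mul (JoinedIn.refl ha) <| joinedIn_one (one_mul 1) hβ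
    (fun v w => (hsymm.eq w v).symm.trans (one_mul _).symm) h hcb (.inr (.inr (.inr hsign)))
  rwa [mul_one, hacb] at hjoin

lemma natCard_connectedComponents_specialStabilizer_eq_one (hε : ε * ε = 1) (hβ : β.Nondegenerate)
    (hsymm : IsEpsSymm ε β) (hW : ε = -1 ∨ W ≤ β.orthogonal W ∨ β.orthogonal W ≤ W) :
    Nat.card (ConnectedComponents (continuousSpecialStabilizer β W)) = 1 := by
  obtain ⟨ι, p, h⟩ := exists_isSubquotient W (W ⊓ β.orthogonal W)
  have hjoin : ∀ x : continuousSpecialStabilizer β W, Joined 1 x := fun x =>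
    (joinedIn_one hε hβ hsymm h x.2 (by tauto)).joined_subtype
  exact (natCard_connectedComponents_eq (continuous_const (y := ())) (fun _ => ⟨1, rfl⟩)
    fun x y _ => connectedComponents_coe_eq_of_joined ((hjoin x).symm.trans (hjoin y))).trans
      Nat.card_unique

lemma natCard_connectedComponents_specialStabilizer_eq_two (hβ : β.Nondegenerate)
    (hsymm : β.IsSymm) (hW : ¬W ≤ β.orthogonal W) (hW' : ¬β.orthogonal W ≤ W) :
    Nat.card (ConnectedComponents (continuousSpecialStabilizer β W)) = 2 := by
  obtain ⟨ι, p, h⟩ := exists_isSubquotient W (W ⊓ β.orthogonal W)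
  let f (x : continuousSpecialStabilizer β W) : ({1, -1} : Set ℂ) :=
    ⟨subquotientDet ι p x.1, mul_self_eq_one_iff.mp
      (subquotientDet_mul_self hsymm.isRefl h x.2.1 x.2.2.2)⟩
  have hf : Continuous f :=
    ((continuous_subquotientDet ι p).comp continuous_subtype_val).subtype_mk _
  have hcard : Nat.card ({1, -1} : Set ℂ) = 2 := by
    rw [Nat.card_coe_set_eq, Set.ncard_pair (by norm_num)]
  refine (natCard_connectedComponents_eq hf ?_ fun x y hxy => ?_).trans hcard
  · rintro ⟨_, rfl | rfl⟩
    · exact ⟨1, Subtype.ext h.subquotientDet_one⟩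
    · obtain ⟨a, ha, hdet⟩ :=
        exists_mem_specialStabilizer_subquotientDet_eq_neg_one hβ hsymm h hW hW'
      exact ⟨⟨LinearMap.toContinuousLinearMap a, ha⟩, Subtype.ext hdet⟩
  · exact connectedComponents_coe_eq_of_joined
      (joinedIn_of_subquotientDet_eq hβ hsymm h x.2 y.2 (congrArg Subtype.val hxy)).joined_subtype

end SpecialStabilizer

section BlockTriangular

variable {m : ℕ} {Bi : Fin m → Type*} [∀ i, AddCommGroup (Bi i)] [∀ i, Module ℂ (Bi i)]

/-- The block upper triangular endomorphisms of `B = B₁ ⊕ ⋯ ⊕ B_m`. -/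
noncomputable def blockTriangular (Bi : Fin m → Type*) [∀ i, AddCommGroup (Bi i)]
    [∀ i, Module ℂ (Bi i)] : Subalgebra ℂ (End ℂ (∀ j, Bi j)) :=
  ⨅ i, invariantSubalgebra (Ble Bi i)

/-- The diagonal block at `i` of an endomorphism of `B = B₁ ⊕ ⋯ ⊕ B_m`. -/
noncomputable def diagBlock (i : Fin m) : End ℂ (∀ j, Bi j) →ₗ[ℂ] End ℂ (Bi i) where
  toFun g := LinearMap.proj i ∘ₗ g ∘ₗ LinearMap.single ℂ Bi i
  map_add' _ _ := rfl
  map_smul' _ _ := rfl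

/-- The block diagonal endomorphism with given diagonal blocks. -/
noncomputable def blockDiag : (∀ i, End ℂ (Bi i)) →ₗ[ℂ] End ℂ (∀ j, Bi j) where
  toFun a := LinearMap.pi fun i => a i ∘ₗ LinearMap.proj i
  map_add' _ _ := rfl
  map_smul' _ _ := rfl

lemma mem_blockTriangular_iff {g : End ℂ (∀ j, Bi j)} :
    g ∈ blockTriangular Bi ↔ ∀ i, ∀ v ∈ Ble Bi i, g v ∈ Ble Bi i :=
  Algebra.mem_iInf

lemma single_mem_Ble {i l : Fin m} (h : l ≤ i) (x : Bi l) :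
    (Pi.single l x : ∀ j, Bi j) ∈ Ble Bi i :=
  fun _ hj => Pi.single_eq_of_ne (h.trans_lt hj).ne' x

lemma sub_single_mem_Blt {i : Fin m} {v : ∀ j, Bi j} (hv : v ∈ Ble Bi i) {x : Bi i}
    (hx : v i = x) : v - Pi.single i x ∈ Blt Bi i := fun j hj => by
  rcases (Set.mem_Ici.mp hj).eq_or_lt with rfl | h
  · exact sub_eq_zero.mpr (hx.trans (Pi.single_eq_same _ x).symm)
  · exact sub_eq_zero.mpr ((hv j h).trans (Pi.single_eq_of_ne h.ne' x).symm)

lemma mem_blockTriangular_of_single {g : End ℂ (∀ j, Bi j)}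
    (hg : ∀ i x, g (Pi.single i x) ∈ Ble Bi i) : g ∈ blockTriangular Bi := by
  refine mem_blockTriangular_iff.mpr fun i v hv => ?_
  rw [← Finset.univ_sum_single v, map_sum]
  refine sum_mem fun l _ => ?_
  rcases le_or_gt l i with hl | hl
  · exact fun j hj => hg l _ j (lt_of_le_of_lt hl hj)
  · rw [hv l hl, Pi.single_zero, map_zero]
    exact zero_mem _

lemma apply_apply_eq_diagBlock {g : End ℂ (∀ j, Bi j)} (hg : g ∈ blockTriangular Bi) {i : Fin m}
    {v : ∀ j, Bi j} (hv : v ∈ Ble Bi i) : g v i = diagBlock i g (v i) := by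
  rw [← Finset.univ_sum_single v, map_sum, Finset.sum_apply, Finset.univ_sum_single v]
  refine Finset.sum_eq_single i (fun l _ hl => ?_) (by simp)
  rcases hl.lt_or_gt with h | h
  · exact mem_blockTriangular_iff.mp hg l _ (single_mem_Ble le_rfl _) i h
  · rw [hv l h, Pi.single_zero, map_zero, Pi.zero_apply]

lemma diagBlock_mul {g : End ℂ (∀ j, Bi j)} (hg : g ∈ blockTriangular Bi)
    {h : End ℂ (∀ j, Bi j)} (hh : h ∈ blockTriangular Bi) (i : Fin m) :
    diagBlock i (g * h) = diagBlock i g * diagBlock i h :=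
  LinearMap.ext fun x => apply_apply_eq_diagBlock hg
    (mem_blockTriangular_iff.mp hh i _ (single_mem_Ble le_rfl x))

lemma diagBlock_one (i : Fin m) : diagBlock i (1 : End ℂ (∀ j, Bi j)) = 1 :=
  LinearMap.ext fun x => Pi.single_eq_same i x

lemma diagBlock_blockDiag (a : ∀ i, End ℂ (Bi i)) (i : Fin m) : diagBlock i (blockDiag a) = a i :=
  LinearMap.ext fun x => congrArg (a i) (Pi.single_eq_same i x)

lemma blockDiag_mem_blockTriangular (a : ∀ i, End ℂ (Bi i)) : blockDiag a ∈ blockTriangular Bi :=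
  mem_blockTriangular_iff.mpr fun _ _ hv j hj => (congrArg (a j) (hv j hj)).trans (map_zero _)

lemma diagBlock_mem_invariantSubalgebra {g : End ℂ (∀ j, Bi j)} (hg : g ∈ blockTriangular Bi)
    {H : Submodule ℂ (∀ j, Bi j)} (hH : g ∈ invariantSubalgebra H) (i : Fin m) :
    diagBlock i g ∈ invariantSubalgebra (prI Bi i H) := by
  rintro _ ⟨v, hv, rfl⟩
  exact ⟨g v, ⟨hH v hv.1, mem_blockTriangular_iff.mp hg i v hv.2⟩,
    apply_apply_eq_diagBlock hg hv.2⟩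

lemma exists_mem_Ble_apply_ne_zero {v : ∀ j, Bi j} (hv : v ≠ 0) :
    ∃ i, v ∈ Ble Bi i ∧ v i ≠ 0 := by
  obtain ⟨i, hi⟩ := (Set.toFinite {i | v i ≠ 0}).exists_maximal (Function.ne_iff.mp hv)
  exact ⟨i, fun j hj => not_not.mp fun hne => hi.not_gt hne hj, hi.prop⟩

@[elab_as_elim]
lemma induction_Ble {P : (∀ j, Bi j) → Prop} (zero : P 0)
    (step : ∀ i, ∀ v ∈ Ble Bi i, P (v - Pi.single i (v i)) → P v) (v : ∀ j, Bi j) : P v := by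
  induction hn : {j | v j ≠ 0}.ncard using Nat.strong_induction_on generalizing v with | _ n ih
  by_cases hv : v = 0
  · exact hv ▸ zero
  obtain ⟨i, hi, hvi⟩ := exists_mem_Ble_apply_ne_zero hv
  refine step i v hi (ih _ (hn ▸ Set.ncard_lt_ncard ⟨fun j hj => ?_, fun h => ?_⟩) _ rfl)
  · rcases eq_or_ne j i with rfl | hji
    · exact hvi
    · rwa [Set.mem_ofPred_eq, Pi.sub_apply, Pi.single_eq_of_ne hji, sub_zero] at hj
  · exact h hvi (by simp)

lemma isUnit_of_isUnit_diagBlock [∀ i, FiniteDimensional ℂ (Bi i)] {g : End ℂ (∀ j, Bi j)}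
    (hg : g ∈ blockTriangular Bi) (hu : ∀ i, IsUnit (diagBlock i g)) : IsUnit g := by
  refine isUnit_of_injective ((injective_iff_map_eq_zero g).mpr fun v hv => ?_)
  by_contra hne
  obtain ⟨i, hvi, hi⟩ := exists_mem_Ble_apply_ne_zero hne
  refine hi ((map_eq_zero_iff _ ((End.isUnit_iff _).mp (hu i)).injective).mp ?_)
  rw [← apply_apply_eq_diagBlock hg hvi, hv, Pi.zero_apply]

lemma exists_section_prI (H : Submodule ℂ (∀ j, Bi j)) (i : Fin m) :
    ∃ s : Bi i →ₗ[ℂ] ∀ j, Bi j, (∀ x, s x ∈ Ble Bi i) ∧ (∀ x, s x i = x) ∧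
      ∀ x ∈ prI Bi i H, s x ∈ H := by
  let q : ↥(H ⊓ Ble Bi i) →ₗ[ℂ] prI Bi i H :=
    (LinearMap.proj i).restrict fun x hx => Submodule.mem_map_of_mem hx
  obtain ⟨t, ht⟩ := q.exists_rightInverse_of_surjective <| LinearMap.range_eq_top.mpr <| by
    rintro ⟨_, v, hv, rfl⟩
    exact ⟨⟨v, hv⟩, rfl⟩
  have ht' : ∀ x : prI Bi i H, (t x : ∀ j, Bi j) i = x := fun x =>
    congrArg Subtype.val (LinearMap.congr_fun ht x)
  let δ : prI Bi i H →ₗ[ℂ] Blt Bi i := LinearMap.codRestrict _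
    ((H ⊓ Ble Bi i).subtype ∘ₗ t - LinearMap.single ℂ Bi i ∘ₗ (prI Bi i H).subtype) fun x =>
      sub_single_mem_Blt (t x).2.2 (ht' x)
  obtain ⟨e, he⟩ := δ.exists_extend
  have he' : ∀ x : prI Bi i H, (e x : ∀ j, Bi j) = t x - Pi.single i (x : Bi i) := fun x =>
    congrArg Subtype.val (LinearMap.congr_fun he x)
  refine ⟨LinearMap.single ℂ Bi i + (Blt Bi i).subtype ∘ₗ e, fun x => ?_, fun x => ?_,
    fun x hx => ?_⟩
  · exact add_mem (single_mem_Ble le_rfl x) fun j hj => (e x).2 j (Set.mem_Ici_of_Ioi hj)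
  · refine (congrArg₂ (· + ·) (Pi.single_eq_same i x) ((e x).2 i ?_)).trans (add_zero x)
    exact Set.mem_Ici.mpr le_rfl
  · have hsx : (LinearMap.single ℂ Bi i + (Blt Bi i).subtype ∘ₗ e) x = t ⟨x, hx⟩ :=
      (congrArg (Pi.single i x + ·) (he' ⟨x, hx⟩)).trans (add_sub_cancel _ _)
    exact hsx ▸ (t ⟨x, hx⟩).2.1

lemma exists_map_pi_prI_eq [∀ i, FiniteDimensional ℂ (Bi i)] (H : Submodule ℂ (∀ j, Bi j)) :
    ∃ u ∈ blockTriangular Bi, (∀ i, diagBlock i u = 1) ∧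
      (Submodule.pi Set.univ fun i => prI Bi i H).map u = H := by
  choose s hs hsi hsH using exists_section_prI H
  let u : End ℂ (∀ j, Bi j) := LinearMap.lsum ℂ Bi ℂ s
  have hus : ∀ i x, u (Pi.single i x) = s i x := fun i x => LinearMap.lsum_piSingle ℂ Bi ℂ s i x
  have hu : u ∈ blockTriangular Bi := mem_blockTriangular_of_single fun i x => hus i x ▸ hs i x
  have hdiag : ∀ i, diagBlock i u = 1 := fun i =>
    LinearMap.ext fun x => (congrFun (hus i x) i).trans (hsi i x)
  refine ⟨u, hu, hdiag, le_antisymm ?_ fun h hh => ?_⟩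
  · rintro _ ⟨v, hv, rfl⟩
    rw [← Finset.univ_sum_single v, map_sum]
    exact sum_mem fun i _ => hus i (v i) ▸ hsH i _ (hv i trivial)
  · obtain ⟨v, rfl⟩ := ((End.isUnit_iff u).mp
      (isUnit_of_isUnit_diagBlock hu fun i => hdiag i ▸ isUnit_one)).surjective h
    refine Submodule.mem_map_of_mem ?_
    induction v using induction_Ble with
    | zero => exact zero_mem _
    | step i v hv ih =>
      have hvi : v i ∈ prI Bi i H := ⟨u v, ⟨hh, mem_blockTriangular_iff.mp hu i v hv⟩,
        (apply_apply_eq_diagBlock hu hv).trans (by rw [hdiag, End.one_apply])⟩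
      have hmem : u (v - Pi.single i (v i)) ∈ H := by
        rw [map_sub, hus]
        exact sub_mem hh (hsH i _ hvi)
      rw [← sub_add_cancel v (Pi.single i (v i))]
      exact add_mem (ih hmem) (Submodule.le_comap_single_pi _ hvi)

end BlockTriangular

section Global

variable {m : ℕ} {Bi : Fin m → Type*} [∀ i, AddCommGroup (Bi i)] [∀ i, Module ℂ (Bi i)]
  [∀ i, FiniteDimensional ℂ (Bi i)] {H : Submodule ℂ (∀ j, Bi j)}

lemma exists_linearMap_diagBlock_eq (H : Submodule ℂ (∀ j, Bi j)) :
    ∃ D : (∀ i, End ℂ (Bi i)) →ₗ[ℂ] End ℂ (∀ j, Bi j),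
      (∀ a, D a ∈ blockTriangular Bi) ∧ (∀ a i, diagBlock i (D a) = a i) ∧
      ∀ a, (∀ i, a i ∈ invariantSubalgebra (prI Bi i H)) → D a ∈ invariantSubalgebra H := by
  obtain ⟨u, hu, hdiag, hmap⟩ := exists_map_pi_prI_eq H
  have hunit : IsUnit u := isUnit_of_isUnit_diagBlock hu fun i => hdiag i ▸ isUnit_one
  obtain ⟨b, hub, hbu⟩ := isUnit_iff_exists.mp hunit
  have hb : b ∈ blockTriangular Bi := mem_blockTriangular_iff.mpr fun i v hv => by
    rw [← map_eq_of_isUnit hunit (mem_blockTriangular_iff.mp hu i)] at hv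
    obtain ⟨w, hw, rfl⟩ := hv
    rwa [← End.mul_apply, hbu]
  have hmem := fun a => blockDiag_mem_blockTriangular (Bi := Bi) a
  have hbdiag : ∀ i, diagBlock i b = 1 := fun i => by
    rw [← one_mul (diagBlock i b), ← hdiag, ← diagBlock_mul hu hb, hub, diagBlock_one, hdiag]
  refine ⟨LinearMap.mulLeftRight ℂ (u, b) ∘ₗ blockDiag, fun a => mul_mem (mul_mem hu (hmem a)) hb,
    fun a i => ?_, fun a ha => ?_⟩
  · rw [LinearMap.comp_apply, LinearMap.mulLeftRight_apply, diagBlock_mul (mul_mem hu (hmem a)) hb,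
      diagBlock_mul hu (hmem a), hdiag, hbdiag, diagBlock_blockDiag, one_mul, mul_one]
  · intro h hh
    rw [← hmap] at hh
    obtain ⟨v, hv, rfl⟩ := hh
    have hbuv : b (u v) = v := LinearMap.congr_fun hbu v
    refine hmap.le ⟨blockDiag a v, fun i _ => ha i _ (hv i trivial), ?_⟩
    exact congrArg (u ∘ blockDiag a) hbuv.symm

variable {βi : ∀ i, LinearMap.BilinForm ℂ (Bi i)}

lemma memQB_iff (hβ : ∀ i, (βi i).Nondegenerate) {g : End ℂ (∀ j, Bi j)} :
    memQB Bi βi g ↔ g ∈ blockTriangular Bi ∧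
      ∀ i, (βi i).IsOrthogonal (diagBlock i g) ∧ LinearMap.det (diagBlock i g) = 1 := by
  constructor
  · rintro ⟨-, hg⟩
    choose a ha hdet hga using hg
    have hgx : ∀ i x, g (Pi.single i x) - Pi.single i (a i x) ∈ Blt Bi i := fun i x => by
      simpa only [Pi.single_eq_same] using hga i (Pi.single i x) fun j hj => Pi.single_eq_of_ne hj x
    have hdiag : ∀ i, diagBlock i g = a i := fun i => LinearMap.ext fun x =>
      (sub_eq_zero.mp (hgx i x i (Set.mem_Ici.mpr le_rfl))).trans (Pi.single_eq_same i _)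
    refine ⟨mem_blockTriangular_of_single fun i x => ?_, fun i => hdiag i ▸ ⟨ha i, hdet i⟩⟩
    rw [← sub_add_cancel (g (Pi.single i x)) (Pi.single i (a i x))]
    exact add_mem (fun j hj => hgx i x j (Set.mem_Ici_of_Ioi hj)) (single_mem_Ble le_rfl _)
  · rintro ⟨hg, hdiag⟩
    have hu := fun i => isUnit_of_isOrthogonal (hβ i) (hdiag i).1
    refine ⟨(End.isUnit_iff g).mp (isUnit_of_isUnit_diagBlock hg hu), fun i =>
      ⟨LinearEquiv.ofBijective _ ((End.isUnit_iff _).mp (hu i)), (hdiag i).1, (hdiag i).2,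
        fun v hv => ?_⟩⟩
    have hvi : v ∈ Ble Bi i := fun j hj => hv j (ne_of_gt hj)
    exact sub_single_mem_Blt (mem_blockTriangular_iff.mp hg i v hvi)
      (apply_apply_eq_diagBlock hg hvi)

lemma memQB_and_map_eq_iff (hβ : ∀ i, (βi i).Nondegenerate) {g : End ℂ (∀ j, Bi j)} :
    memQB Bi βi g ∧ H.map g = H ↔ g ∈ blockTriangular Bi ⊓ invariantSubalgebra H ∧
      ∀ i, diagBlock i g ∈ specialStabilizer (βi i) (prI Bi i H) := by
  rw [memQB_iff hβ]
  constructor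
  · rintro ⟨⟨hg, hdiag⟩, hH⟩
    have hgH : g ∈ invariantSubalgebra H := Submodule.map_le_iff_le_comap.mp hH.le
    exact ⟨⟨hg, hgH⟩, fun i =>
      ⟨(hdiag i).1, (hdiag i).2, diagBlock_mem_invariantSubalgebra hg hgH i⟩⟩
  · rintro ⟨⟨hg, hgH⟩, hdiag⟩
    have hu := isUnit_of_isUnit_diagBlock hg fun i => isUnit_of_isOrthogonal (hβ i) (hdiag i).1
    exact ⟨⟨hg, fun i => ⟨(hdiag i).1, (hdiag i).2.1⟩⟩, map_eq_of_isUnit hu hgH⟩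

end Global

section GlobalTopology

variable {m : ℕ} {Bi : Fin m → Type*} [∀ i, NormedAddCommGroup (Bi i)]
  [∀ i, NormedSpace ℂ (Bi i)] [∀ i, FiniteDimensional ℂ (Bi i)] {H : Submodule ℂ (∀ j, Bi j)}
  {βi : ∀ i, LinearMap.BilinForm ℂ (Bi i)}

lemma joinedIn_of_diagBlock_eq (hβ : ∀ i, (βi i).Nondegenerate)
    {g h : (∀ j, Bi j) →L[ℂ] ∀ j, Bi j}
    (hg : memQB Bi βi (g : End ℂ (∀ j, Bi j)) ∧ H.map (g : End ℂ (∀ j, Bi j)) = H)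
    (hh : memQB Bi βi (h : End ℂ (∀ j, Bi j)) ∧ H.map (h : End ℂ (∀ j, Bi j)) = H)
    (hgh : ∀ i, diagBlock i (g : End ℂ (∀ j, Bi j)) = diagBlock i (h : End ℂ (∀ j, Bi j))) :
    JoinedIn {g : (∀ j, Bi j) →L[ℂ] ∀ j, Bi j | memQB Bi βi (g : End ℂ (∀ j, Bi j)) ∧
      H.map (g : End ℂ (∀ j, Bi j)) = H} g h := by
  refine .of_segment_subset ?_
  rintro _ ⟨s, t, -, -, hst, rfl⟩
  have hg' := (memQB_and_map_eq_iff hβ).mp hg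
  have hh' := (memQB_and_map_eq_iff hβ).mp hh
  have hst' : (s : ℂ) + t = 1 := by exact_mod_cast hst
  refine (memQB_and_map_eq_iff (g := (s : ℂ) • (g : End ℂ (∀ j, Bi j)) + (t : ℂ) • h) hβ).mpr
    ⟨add_mem (Subalgebra.smul_mem _ hg'.1 s) (Subalgebra.smul_mem _ hh'.1 t), fun i => ?_⟩
  rw [map_add, map_smul, map_smul, ← hgh, ← add_smul, hst', one_smul]
  exact hg'.2 i

lemma natCard_connectedComponents_stabilizer (hβ : ∀ i, (βi i).Nondegenerate) :
    Nat.card (ConnectedComponents {g : (∀ j, Bi j) →L[ℂ] ∀ j, Bi j //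
      memQB Bi βi (g : (∀ j, Bi j) →ₗ[ℂ] ∀ j, Bi j) ∧
        Submodule.map (g : (∀ j, Bi j) →ₗ[ℂ] ∀ j, Bi j) H = H}) =
      ∏ i, Nat.card (ConnectedComponents (continuousSpecialStabilizer (βi i) (prI Bi i H))) := by
  obtain ⟨D, hD, hdiag, hDH⟩ := exists_linearMap_diagBlock_eq H
  have hDmem : ∀ a : ∀ i, continuousSpecialStabilizer (βi i) (prI Bi i H),
      memQB Bi βi (D fun i => (a i).1) ∧ Submodule.map (D fun i => (a i).1) H = H := fun a =>
    (memQB_and_map_eq_iff hβ).mpr ⟨⟨hD _, hDH _ fun i => (a i).2.2.2⟩, fun i =>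
      (hdiag _ i).symm ▸ (a i).2⟩
  rw [← natCard_connectedComponents_pi]
  refine natCard_connectedComponents_eq_of_retraction
    (r := fun g i => ⟨LinearMap.toContinuousLinearMap (diagBlock i g.1),
      ((memQB_and_map_eq_iff hβ).mp g.2).2 i⟩)
    (s := fun a => ⟨LinearMap.toContinuousLinearMap (D fun i => (a i).1), hDmem a⟩)
    ?_ ?_ (fun a => ?_) fun g => ?_
  · refine continuous_pi fun i => Continuous.subtype_mk ?_ _
    exact (LinearMap.toContinuousLinearMap.toLinearMap ∘ₗ diagBlock i ∘ₗ
      ContinuousLinearMap.coeLM ℂ (M := ∀ j, Bi j)).continuous_of_finiteDimensional.comp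
        continuous_subtype_val
  · exact ((LinearMap.toContinuousLinearMap.toLinearMap ∘ₗ D ∘ₗ LinearMap.pi fun i =>
      ContinuousLinearMap.coeLM ℂ ∘ₗ LinearMap.proj i).continuous_of_finiteDimensional.comp
        (continuous_pi fun i => continuous_subtype_val.comp (continuous_apply i))).subtype_mk _
  · exact funext fun i => Subtype.ext (ContinuousLinearMap.coe_injective (hdiag _ i))
  · exact (joinedIn_of_diagBlock_eq hβ g.2 (hDmem _) fun i =>
      (hdiag (fun i => diagBlock i (g.1 : End ℂ (∀ j, Bi j))) i).symm).joined_subtype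

end GlobalTopology

section Component

lemma bperp_eq_orthogonal {V : Type*} [AddCommGroup V] [Module ℂ V] {β : LinearMap.BilinForm ℂ V}
    (hβ : β.IsRefl) (W : Submodule ℂ V) : bperp β W = β.orthogonal W :=
  Submodule.ext fun v => forall₂_congr fun w _ => ⟨hβ v w, hβ w v⟩

lemma max_lt_finrank_sub_finrank_inf_orthogonal_iff {K V : Type*} [Field K] [AddCommGroup V]
    [Module K V] [FiniteDimensional K V] {β : LinearMap.BilinForm K V} (hβ : β.Nondegenerate)
    (W : Submodule K V) :
    max 0 (2 * (finrank K W : ℤ) - finrank K V) < finrank K W - finrank K ↥(W ⊓ β.orthogonal W) ↔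
      ¬W ≤ β.orthogonal W ∧ ¬β.orthogonal W ≤ W := by
  have hfinrank := LinearMap.BilinForm.finrank_orthogonal hβ W
  have := Submodule.finrank_le W
  rw [max_lt_iff]
  refine and_congr ?_ ?_
  · rw [← inf_eq_left, sub_pos, Nat.cast_lt, ← not_le, not_iff_not]
    exact ⟨Submodule.eq_of_le_of_finrank_le inf_le_left, fun h => h.symm ▸ le_rfl⟩
  · rw [← inf_eq_right]
    have hiff : W ⊓ β.orthogonal W = β.orthogonal W ↔
        finrank K (β.orthogonal W) ≤ finrank K ↥(W ⊓ β.orthogonal W) :=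
      ⟨fun h => h.symm ▸ le_rfl, Submodule.eq_of_le_of_finrank_le inf_le_right⟩
    rw [hiff]
    lia

open Classical in
lemma natCard_connectedComponents_specialStabilizer {V : Type*} [NormedAddCommGroup V]
    [NormedSpace ℂ V] [FiniteDimensional ℂ V] {β : LinearMap.BilinForm ℂ V} (hβ : β.Nondegenerate)
    (hrefl : (∀ v w, β v w = β w v) ∨ ∀ v w, β v w = -β w v) (W : Submodule ℂ V) :
    Nat.card (ConnectedComponents (continuousSpecialStabilizer β W)) =
      if (∀ v w, β v w = β w v) ∧ ¬W ≤ β.orthogonal W ∧ ¬β.orthogonal W ≤ W then 2 else 1 := by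
  split_ifs with h
  · exact natCard_connectedComponents_specialStabilizer_eq_two hβ ⟨h.1⟩ h.2.1 h.2.2
  · by_cases hsymm : ∀ v w, β v w = β w v
    · refine natCard_connectedComponents_specialStabilizer_eq_one (one_mul 1) hβ
        (fun v w => (hsymm v w).trans (one_mul _).symm) (.inr ?_)
      tauto
    · exact natCard_connectedComponents_specialStabilizer_eq_one (by norm_num) hβ
        (fun v w => (hrefl.resolve_left hsymm v w).trans (neg_one_mul _).symm) (.inl rfl)

end Component

/-- Proposition 5.1(3) (`prop:filt-orbits`): the stabilizer in `Q_B` of a subspace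
`H ⊆ B = B₁ ⊕ ⋯ ⊕ B_m` has exactly `2^d` connected components, where `d` is the number of
indices `i` such that `⟨-,-⟩_{B_i}` is symmetric and `max {0, 2k_i - n_i} < r_i`.  (The
canonical topology of the finite-dimensional endomorphism space of `B` is realized via
arbitrary norms on the `B_i`.) -/
theorem stmt_12 {m : ℕ} (Bi : Fin m → Type*)
    [∀ i, NormedAddCommGroup (Bi i)] [∀ i, NormedSpace ℂ (Bi i)]
    [∀ i, FiniteDimensional ℂ (Bi i)] [∀ i, Nontrivial (Bi i)]
    (βi : ∀ i, Bi i →ₗ[ℂ] Bi i →ₗ[ℂ] ℂ)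
    (hnd : ∀ i, ∀ v, (∀ w, βi i v w = 0) → v = 0)
    (hrefl : ∀ i, (∀ v w, βi i v w = βi i w v) ∨ (∀ v w, βi i v w = - βi i w v))
    (H : Submodule ℂ (∀ j, Bi j))
    (n k r : Fin m → ℕ)
    (hn : ∀ i, n i = finrank ℂ (Bi i))
    (hk : ∀ i, k i = finrank ℂ ↥(prI Bi i H))
    (hr : ∀ i, (finrank ℂ ↥(prI Bi i H ⊓ bperp (βi i) (prI Bi i H)) : ℤ) =
      (k i : ℤ) - r i)
    (d : ℕ)
    (hd : d = Set.ncard {i : Fin m | (∀ x y, βi i x y = βi i y x) ∧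
      max 0 (2 * (k i : ℤ) - (n i : ℤ)) < (r i : ℤ)}) :
    Nat.card (ConnectedComponents
      {g : (∀ j, Bi j) →L[ℂ] (∀ j, Bi j) //
        memQB Bi βi (g : (∀ j, Bi j) →ₗ[ℂ] (∀ j, Bi j)) ∧
        Submodule.map (g : (∀ j, Bi j) →ₗ[ℂ] (∀ j, Bi j)) H = H}) = 2 ^ d := by
  classical
  have hRefl : ∀ i, LinearMap.IsRefl (βi i) := fun i => (hrefl i).elim
    (fun h x y hxy => (h y x).trans hxy) fun h x y hxy => (h y x).trans (neg_eq_zero.mpr hxy)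
  have hβ : ∀ i, LinearMap.BilinForm.Nondegenerate (βi i) := fun i =>
    (hRefl i).nondegenerate_iff_separatingLeft.mpr (hnd i)
  have hfactor : ∀ i,
      Nat.card (ConnectedComponents (continuousSpecialStabilizer (βi i) (prI Bi i H))) =
        if (∀ x y, βi i x y = βi i y x) ∧ max 0 (2 * (k i : ℤ) - n i) < r i then 2 else 1 := by
    intro i
    have hri : (r i : ℤ) =
        k i - finrank ℂ ↥(prI Bi i H ⊓ LinearMap.BilinForm.orthogonal (βi i) (prI Bi i H)) := by
      rw [← bperp_eq_orthogonal (hRefl i), hr, sub_sub_cancel]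
    rw [natCard_connectedComponents_specialStabilizer (hβ i) (hrefl i), hri, hn, hk]
    exact if_congr (and_congr_right'
      (max_lt_finrank_sub_finrank_inf_orthogonal_iff (hβ i) _).symm) rfl rfl
  rw [natCard_connectedComponents_stabilizer hβ, Finset.prod_congr rfl fun i _ => hfactor i,
    Finset.prod_ite, Finset.prod_const, Finset.prod_const_one, mul_one, hd,
    Set.ncard_eq_toFinset_card', Set.toFinset_ofPred]
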